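/- arXiv:1311.7084 — 14 statements merged into one kernel-verified Lean document; each statement's English description precedes it below -/
import Mathlib

section
/- Let h be a prime power, t ≥ 1, q = h^t, let s ≤ m be positive integers and ε ∈ (0,1). Suppose V_1,…,V_M are F_q-linear subspaces of F_q^m, each of F_q-codimension at most εm, such that for every F_q-subspace W ⊆ F_q^m of F_q-dimension s one has Σ_{i=1}^M dim_{F_q}(V_i ∩ W) ≤ A. Suppose further that S ⊆ F_q^m is an F_h-linear subspace of F_h-codimension at most εtm (viewing F_q^m as an F_h-vector space of dimension tm) such that, for every integer 1 ≤ κ ≤ s and every F_q-subspace U ⊆ F_q^m of F_q-dimension κ, one has |U ∩ S| ≤ h^{(m−1)κ}. Then the F_h-linear subspaces H_i := V_i ∩ S each have F_h-codimension at most 2εtm in F_q^m, and they form an (s, (m−1)A, t) F_h-subspace design: for every F_q-subspace W ⊆ F_q^m of F_q-dimension s, Σ_{i=1}^M dim_{F_h}(H_i ∩ W) ≤ (m−1)·A. -/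
/-- Restricting scalars to a subfield multiplies dimensions by the degree. -/
theorem Submodule.finrank_restrictScalars_eq_mul {K L E : Type*} [Field K] [Field L] [Algebra K L]
    [AddCommGroup E] [Module L E] [Module K E] [IsScalarTower K L E] (U : Submodule L E) :
    Module.finrank K (U.restrictScalars K) = Module.finrank K L * Module.finrank L U :=
  (Module.finrank_mul_finrank K L U).symm

/-- An intersection with at most `|K| ^ n` elements has dimension at most `n`. -/
theorem Submodule.finrank_inf_le_of_natCard_le {K E : Type*} [Field K] [Fintype K]
    [AddCommGroup E] [Module K E] [Module.Finite K E] {U S : Submodule K E} {n : ℕ}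
    (h : Nat.card ↥((U : Set E) ∩ (S : Set E)) ≤ Fintype.card K ^ n) :
    Module.finrank K ↥(U ⊓ S) ≤ n := by
  have hcard : Nat.card ↥(U ⊓ S) = Fintype.card K ^ Module.finrank K ↥(U ⊓ S) := by
    rw [Module.natCard_eq_pow_finrank (K := K), Nat.card_eq_fintype_card]
  refine (Nat.pow_le_pow_iff_right (Fintype.one_lt_card (α := K))).1 ?_
  rw [← hcard]
  exact h

/-- Let `q = h^t`, `1 ≤ s ≤ m`, `ε ∈ (0,1)`. Suppose `V_1, …, V_M` are
`F_q`-subspaces of `F_q^m` of codimension `≤ εm` forming an `(s, A)` `F_q`-subspace design,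
and `S ⊆ F_q^m` is an `F_h`-linear subspace of `F_h`-codimension `≤ εtm` such that
`|U ∩ S| ≤ h^((m-1)κ)` for every `F_q`-subspace `U` of dimension `κ ≤ s`. Then the
`F_h`-subspaces `H_i = V_i ∩ S` have `F_h`-codimension `≤ 2εtm` and form an
`(s, (m-1)A, t)` `F_h`-subspace design. -/
theorem stmt_2 (Fh Fq : Type) [Field Fh] [Fintype Fh] [Field Fq] [Fintype Fq]
    [Algebra Fh Fq] (t : ℕ) (ht : 1 ≤ t)
    (hq : Fintype.card Fq = Fintype.card Fh ^ t)
    (s m : ℕ) (hs : 1 ≤ s) (hsm : s ≤ m) (ε : ℝ) (hε0 : 0 < ε) (hε1 : ε < 1)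
    (M A : ℕ) (V : Fin M → Submodule Fq (Fin m → Fq))
    (hVcodim : ∀ i, (m : ℝ) - Module.finrank Fq (V i) ≤ ε * m)
    (hVdesign : ∀ W : Submodule Fq (Fin m → Fq), Module.finrank Fq W = s →
      ∑ i, Module.finrank Fq ↥(V i ⊓ W) ≤ A)
    (S : Submodule Fh (Fin m → Fq))
    (hScodim : (t * m : ℝ) - Module.finrank Fh S ≤ ε * (t * m))
    (hSevasive : ∀ κ : ℕ, 1 ≤ κ → κ ≤ s →
      ∀ U : Submodule Fq (Fin m → Fq), Module.finrank Fq U = κ →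
        Nat.card ↥((U : Set (Fin m → Fq)) ∩ (S : Set (Fin m → Fq)))
          ≤ Fintype.card Fh ^ ((m - 1) * κ)) :
    (∀ i, (t * m : ℝ) - Module.finrank Fh ↥((V i).restrictScalars Fh ⊓ S)
        ≤ 2 * ε * (t * m)) ∧
    (∀ W : Submodule Fq (Fin m → Fq), Module.finrank Fq W = s →
      ∑ i, Module.finrank Fh
          ↥((W.restrictScalars Fh) ⊓ ((V i).restrictScalars Fh ⊓ S))
        ≤ (m - 1) * A) := by
  have hdeg : Module.finrank Fh Fq = t := by
    have h := Module.card_eq_pow_finrank (K := Fh) (V := Fq)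
    exact Nat.pow_right_injective (Fintype.one_lt_card (α := Fh)) (h.symm.trans hq)
  have hfin : Module.Finite Fh Fq := Module.Finite.of_finite
  refine ⟨fun i => ?_, fun W hW => ?_⟩
  · have hsum := Submodule.finrank_sup_add_finrank_inf_eq ((V i).restrictScalars Fh) S
    have hle := Submodule.finrank_le ((V i).restrictScalars Fh ⊔ S)
    have htot : Module.finrank Fh (Fin m → Fq) = t * m := by
      rw [← Module.finrank_mul_finrank Fh Fq, hdeg, Module.finrank_fin_fun]
    rw [Submodule.finrank_restrictScalars_eq_mul, hdeg] at hsum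
    rw [htot] at hle
    have hsum' : t * Module.finrank Fq (V i) + Module.finrank Fh S
        ≤ t * m + Module.finrank Fh ↥((V i).restrictScalars Fh ⊓ S) := by omega
    have hreal : (t : ℝ) * Module.finrank Fq (V i) + Module.finrank Fh S
        ≤ t * m + Module.finrank Fh ↥((V i).restrictScalars Fh ⊓ S) := by exact_mod_cast hsum'
    have hV := mul_le_mul_of_nonneg_left (hVcodim i) (Nat.cast_nonneg (α := ℝ) t)
    linarith
  · have hterm : ∀ i, Module.finrank Fh
        ↥((W.restrictScalars Fh) ⊓ ((V i).restrictScalars Fh ⊓ S))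
          ≤ (m - 1) * Module.finrank Fq ↥(V i ⊓ W) := fun i => by
      have hinf : W.restrictScalars Fh ⊓ ((V i).restrictScalars Fh ⊓ S)
          = (V i ⊓ W).restrictScalars Fh ⊓ S := by
        ext x
        simp only [Submodule.mem_inf, Submodule.restrictScalars_mem]
        tauto
      rw [hinf]
      rcases Nat.eq_zero_or_pos (Module.finrank Fq ↥(V i ⊓ W)) with h0 | hpos
      · have hle := Submodule.finrank_mono
          (inf_le_left : (V i ⊓ W).restrictScalars Fh ⊓ S ≤ (V i ⊓ W).restrictScalars Fh)
        rw [Submodule.finrank_restrictScalars_eq_mul, h0] at hle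
        simpa [h0] using hle
      · exact Submodule.finrank_inf_le_of_natCard_le (hSevasive _ hpos
          (hW ▸ Submodule.finrank_mono inf_le_right) (V i ⊓ W) rfl)
    calc _ ≤ ∑ i, (m - 1) * Module.finrank Fq ↥(V i ⊓ W) := Finset.sum_le_sum fun i _ => hterm i
      _ = (m - 1) * ∑ i, Module.finrank Fq ↥(V i ⊓ W) := (Finset.mul_sum ..).symm
      _ ≤ (m - 1) * A := Nat.mul_le_mul_left _ (hVdesign W hW)
end

section
/- Let h be a prime power, t ≥ 1, q = h^t, and let s, m, k be positive integers. Let H ⊆ F_q^{mk} be an (s,m,k)-periodic affine subspace, and let H_1,…,H_k be F_h-linear subspaces of F_q^m such that for every F_q-subspace W' ⊆ F_q^m of F_q-dimension at most s one has Σ_{j=1}^k dim_{F_h}(W' ∩ H_j) ≤ A. Then the intersection H ∩ (H_1 × H_2 × ⋯ × H_k), if nonempty, is an affine subspace of F_q^{mk} over F_h of F_h-dimension at most A; in particular it has at most h^A elements. -/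
/-- A subspace of `M^k` whose members have their first possibly nonzero coordinate `j` in `U j`
has dimension at most `∑ j, dim (U j)`. -/
theorem Submodule.finrank_le_sum_of_leading_mem {K M : Type*} [Field K] [AddCommGroup M]
    [Module K M] [FiniteDimensional K M] {k : ℕ} (L : Submodule K (Fin k → M))
    (U : Fin k → Submodule K M)
    (hL : ∀ x ∈ L, ∀ j, (∀ j' < j, x j' = 0) → x j ∈ U j) :
    Module.finrank K L ≤ ∑ j, Module.finrank K (U j) := by
  induction k with
  | zero => simp [Module.finrank_zero_of_subsingleton]
  | succ k ih =>
    let i : (Fin k → M) →ₗ[K] (Fin (k + 1) → M) :=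
      LinearMap.pi (Fin.cons 0 fun j => LinearMap.proj j)
    have hi_zero (x : Fin k → M) : i x 0 = 0 := by simp [i]
    have hi_succ (x : Fin k → M) (j : Fin k) : i x j.succ = x j := by simp [i]
    let f : L →ₗ[K] M := (LinearMap.proj 0).domRestrict L
    have hrange : Module.finrank K (LinearMap.range f) ≤ Module.finrank K (U 0) := by
      refine Submodule.finrank_mono ?_
      rintro _ ⟨x, rfl⟩
      exact hL x x.2 0 fun j' hj' => absurd hj' (Fin.not_lt_zero j')
    have hker : Module.finrank K (LinearMap.ker f) ≤ Module.finrank K (L.comap i) := by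
      have hle : (LinearMap.ker f).map L.subtype ≤ (L.comap i).map i := by
        rintro _ ⟨x, hx, rfl⟩
        have hx0 : (x : Fin (k + 1) → M) 0 = 0 := hx
        have hix : i (fun j => (x : Fin (k + 1) → M) j.succ) = x := by
          funext j
          refine Fin.cases ?_ (fun j => ?_) j
          · rw [hi_zero, hx0]
          · rw [hi_succ]
        refine ⟨fun j => (x : Fin (k + 1) → M) j.succ, ?_, hix⟩
        change i _ ∈ L
        rw [hix]
        exact x.2
      calc Module.finrank K (LinearMap.ker f)
          = Module.finrank K ((LinearMap.ker f).map L.subtype) :=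
            (Submodule.finrank_map_subtype_eq L _).symm
        _ ≤ Module.finrank K ((L.comap i).map i) := Submodule.finrank_mono hle
        _ ≤ Module.finrank K (L.comap i) := Submodule.finrank_map_le _ _
    have hcomap := ih (L.comap i) (fun j => U j.succ) fun x hx j hj => by
      rw [← hi_succ x j]
      refine hL (i x) hx j.succ fun j' => Fin.cases (fun _ => hi_zero x) (fun j' hj' => ?_) j'
      rw [hi_succ]
      exact hj j' (Fin.succ_lt_succ_iff.mp hj')
    rw [Fin.sum_univ_succ, ← f.finrank_range_add_finrank_ker]
    lia

/-- Let `q = h^t` and let `H ⊆ F_q^{mk}` (identified with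
`Fin k → Fin m → F_q`) be an `(s,m,k)`-periodic affine subspace, witnessed by an
`F_q`-subspace `W ⊆ F_q^m` with `dim_{F_q} W ≤ s`. Let `H_1, …, H_k` be `F_h`-subspaces of
`F_q^m` with `Σ_j dim_{F_h}(W' ∩ H_j) ≤ A` for every `F_q`-subspace `W'` of dimension
`≤ s`. Then `H ∩ (H_1 × ⋯ × H_k)`, if nonempty, is a coset of an `F_h`-subspace of
`F_h`-dimension `≤ A`; in particular it has at most `h^A` elements. -/
theorem stmt_3 (Fh Fq : Type) [Field Fh] [Fintype Fh] [Field Fq] [Fintype Fq]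
    [Algebra Fh Fq] (t : ℕ) (ht : 1 ≤ t)
    (hq : Fintype.card Fq = Fintype.card Fh ^ t)
    (s m k A : ℕ) (hs : 0 < s) (hm : 0 < m) (hk : 0 < k)
    (H : Set (Fin k → Fin m → Fq))
    (haff : ∃ (H₀ : Submodule Fq (Fin k → Fin m → Fq)) (x₀ : Fin k → Fin m → Fq),
      H = {x | x - x₀ ∈ H₀})
    (W : Submodule Fq (Fin m → Fq)) (hWdim : Module.finrank Fq W ≤ s)
    (hper : ∀ (j : Fin k) (a : Fin k → Fin m → Fq), ∃ v : Fin m → Fq,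
      ∀ x ∈ H, (∀ j' : Fin k, j' < j → x j' = a j') → x j - v ∈ W)
    (Hs : Fin k → Submodule Fh (Fin m → Fq))
    (hdesign : ∀ W' : Submodule Fq (Fin m → Fq), Module.finrank Fq W' ≤ s →
      ∑ j : Fin k, Module.finrank Fh ↥((W'.restrictScalars Fh) ⊓ Hs j) ≤ A) :
    ((H ∩ {x | ∀ j, x j ∈ Hs j}).Nonempty →
      ∃ (L : Submodule Fh (Fin k → Fin m → Fq)) (v : Fin k → Fin m → Fq),
        Module.finrank Fh L ≤ A ∧
        H ∩ {x | ∀ j, x j ∈ Hs j} = {x | x - v ∈ L}) ∧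
    Nat.card ↥(H ∩ {x | ∀ j, x j ∈ Hs j}) ≤ Fintype.card Fh ^ A := by
  have hcoset : (H ∩ {x | ∀ j, x j ∈ Hs j}).Nonempty →
      ∃ (L : Submodule Fh (Fin k → Fin m → Fq)) (v : Fin k → Fin m → Fq),
        Module.finrank Fh L ≤ A ∧
        H ∩ {x | ∀ j, x j ∈ Hs j} = {x | x - v ∈ L} := by
    rintro ⟨p, hpH, hpHs⟩
    obtain ⟨H₀, x₀, rfl⟩ := haff
    refine ⟨H₀.restrictScalars Fh ⊓ Submodule.pi Set.univ Hs, p, ?_, ?_⟩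
    · refine (Submodule.finrank_le_sum_of_leading_mem _
        (fun j => W.restrictScalars Fh ⊓ Hs j) ?_).trans (hdesign W hWdim)
      rintro x ⟨hx, hxHs⟩ j hj
      refine ⟨?_, hxHs j (Set.mem_univ j)⟩
      obtain ⟨v, hv⟩ := hper j p
      have hp := hv p hpH fun _ _ => rfl
      have hpx := hv (x + p) (by
        change x + p - x₀ ∈ H₀
        rw [add_sub_assoc]
        exact H₀.add_mem hx hpH) fun j' hj' => by simp [hj j' hj']
      have hdiff := W.sub_mem hpx hp
      simpa using hdiff
    · ext x
      have hH : x - p ∈ H₀ ↔ x - x₀ ∈ H₀ := by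
        rw [← sub_add_sub_cancel x p x₀]
        exact (H₀.add_mem_iff_left hpH).symm
      have hHs (j : Fin k) : x j - p j ∈ Hs j ↔ x j ∈ Hs j :=
        (Hs j).sub_mem_iff_left (hpHs j)
      simp [hH, hHs]
  refine ⟨hcoset, ?_⟩
  rcases (H ∩ {x | ∀ j, x j ∈ Hs j}).eq_empty_or_nonempty with hempty | hne
  · simp [hempty]
  · obtain ⟨L, v, hdim, heq⟩ := hcoset hne
    have hcard : Nat.card {x | x - v ∈ L} = Nat.card L :=
      Nat.card_congr ((Equiv.subRight v).subtypeEquiv fun _ => Iff.rfl)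
    rw [heq, hcard, Module.natCard_eq_pow_finrank (K := Fh), Nat.card_eq_fintype_card]
    exact Nat.pow_le_pow_right Fintype.card_pos hdim
end

section
/- Let h be a prime power, t ≥ 1, q = h^t, and let s, m, k be positive integers. Let H ⊆ F_q^{mk} be an (s,m,k)-periodic affine subspace with witness subspace W ⊆ F_q^m (dim_{F_q} W ≤ s), and let H_1,…,H_k be F_h-linear subspaces of F_q^m. Then for every i ∈ {1,…,k}, the set proj_{[1,im]}(H) ∩ (H_1 × ⋯ × H_i) has at most h^{Σ_{j=1}^i dim_{F_h}(W ∩ H_j)} elements. -/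
/-- If any two elements of `S` agreeing on all coordinates below `j` differ at `j` by an element
of `V j`, then `S` has at most `∏ j, |V j|` elements. -/
theorem Set.natCard_le_prod_of_sub_mem {ι : Type*} [LinearOrder ι] [Fintype ι] {A : Type*}
    [AddGroup A] [Finite A] (V : ι → AddSubgroup A) (S : Set (ι → A))
    (hS : ∀ j, ∀ x ∈ S, ∀ y ∈ S, (∀ j' < j, x j' = y j') → x j - y j ∈ V j) :
    Nat.card S ≤ ∏ j, Nat.card (V j) := by
  let restrictBelow (j : ι) (x : S) : Set.Iio j → A := fun j' => x.1 j'
  let rep (j : ι) (x : S) : S := (Quotient.mk (Setoid.ker (restrictBelow j)) x).out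
  have rep_eq (j : ι) (x : S) : ∀ j' < j, x.1 j' = (rep j x).1 j' := fun j' hj' =>
    (congrFun (Quotient.mk_out (s := Setoid.ker (restrictBelow j)) x) ⟨j', hj'⟩).symm
  let diff (x : S) (j : ι) : V j :=
    ⟨x.1 j - (rep j x).1 j, hS j x.1 x.2 _ (rep j x).2 (rep_eq j x)⟩
  have diff_injective : Function.Injective diff := by
    intro x y hxy
    refine Subtype.ext (funext fun j => ?_)
    induction j using WellFoundedLT.induction with
    | ind j ih =>
      have hrep : rep j x = rep j y :=
        congrArg Quotient.out (Quotient.sound (s := Setoid.ker (restrictBelow j))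
          (funext fun j' => ih j'.1 j'.2))
      have hj : x.1 j - (rep j x).1 j = y.1 j - (rep j y).1 j :=
        congrArg Subtype.val (congrFun hxy j)
      rw [hrep] at hj
      exact sub_left_injective hj
  rw [← Nat.card_pi]
  exact Nat.card_le_card_of_injective diff diff_injective

/-- Let `q = h^t` and let `H ⊆ F_q^{mk}` (identified with
`Fin k → Fin m → F_q`) be an `(s,m,k)`-periodic affine subspace with witness `F_q`-subspace
`W ⊆ F_q^m` (`dim_{F_q} W ≤ s`), and let `H_1, …, H_k` be `F_h`-subspaces of `F_q^m`.
Then for every `1 ≤ i ≤ k`, the set `proj_{[1,im]}(H) ∩ (H_1 × ⋯ × H_i)` has at most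
`h^(Σ_{j=1}^i dim_{F_h}(W ∩ H_j))` elements. -/
theorem stmt_4 (Fh Fq : Type) [Field Fh] [Fintype Fh] [Field Fq] [Fintype Fq]
    [Algebra Fh Fq] (t : ℕ) (ht : 1 ≤ t)
    (hq : Fintype.card Fq = Fintype.card Fh ^ t)
    (s m k : ℕ) (hs : 0 < s) (hm : 0 < m) (hk : 0 < k)
    (H : Set (Fin k → Fin m → Fq))
    (haff : ∃ (H₀ : Submodule Fq (Fin k → Fin m → Fq)) (x₀ : Fin k → Fin m → Fq),
      H = {x | x - x₀ ∈ H₀})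
    (W : Submodule Fq (Fin m → Fq)) (hWdim : Module.finrank Fq W ≤ s)
    (hper : ∀ (j : Fin k) (a : Fin k → Fin m → Fq), ∃ v : Fin m → Fq,
      ∀ x ∈ H, (∀ j' : Fin k, j' < j → x j' = a j') → x j - v ∈ W)
    (Hs : Fin k → Submodule Fh (Fin m → Fq))
    (i : ℕ) (hi0 : 0 < i) (hik : i ≤ k) :
    Nat.card {y : Fin i → Fin m → Fq //
        (∃ x ∈ H, ∀ j : Fin i, x (Fin.castLE hik j) = y j) ∧
        (∀ j : Fin i, y j ∈ Hs (Fin.castLE hik j))}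
      ≤ Fintype.card Fh ^
          (∑ j : Fin i, Module.finrank Fh ↥((W.restrictScalars Fh) ⊓ Hs (Fin.castLE hik j))) := by
  have hcard (j : Fin i) :
      Nat.card ((W.restrictScalars Fh) ⊓ Hs (Fin.castLE hik j)).toAddSubgroup =
        Fintype.card Fh ^
          Module.finrank Fh ↥((W.restrictScalars Fh) ⊓ Hs (Fin.castLE hik j)) := by
    rw [← Nat.card_eq_fintype_card]
    exact Module.natCard_eq_pow_finrank (K := Fh)
      (V := ↥((W.restrictScalars Fh) ⊓ Hs (Fin.castLE hik j)))
  rw [← Finset.prod_pow_eq_pow_sum, ← Finset.prod_congr rfl fun j _ => hcard j]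
  refine Set.natCard_le_prod_of_sub_mem _ {y : Fin i → Fin m → Fq |
    (∃ x ∈ H, ∀ j : Fin i, x (Fin.castLE hik j) = y j) ∧
      ∀ j : Fin i, y j ∈ Hs (Fin.castLE hik j)} ?_
  rintro j y ⟨⟨x, hx, hxy⟩, hy⟩ y' ⟨⟨x', hx', hxy'⟩, hy'⟩ hlt
  refine ⟨?_, Submodule.sub_mem _ (hy j) (hy' j)⟩
  obtain ⟨v, hv⟩ := hper (Fin.castLE hik j) x'
  have hagree : ∀ j' < Fin.castLE hik j, x j' = x' j' := by
    intro j' hj'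
    have h := hlt ⟨j', lt_trans hj' j.2⟩ hj'
    rwa [← hxy, ← hxy'] at h
  have hsub := W.sub_mem (hv x hx hagree) (hv x' hx' fun _ _ => rfl)
  rwa [sub_sub_sub_cancel_right, hxy, hxy'] at hsub
end

section
/- Let h be a prime power, ε ∈ (0,1), and let t, m, s be positive integers with s < εm/2, such that εtm and εtm/8 are integers; set q = h^t and M = h^{εtm/8}. Choose F_h-subspaces H_1,…,H_M of F_q^m (viewed as an F_h-vector space of dimension tm), each chosen independently and uniformly at random among all F_h-subspaces of F_h-codimension εtm. Then with probability at least 1 − q^{−ms}, the collection H_1,…,H_M is an (s, 8s/ε, t) F_h-subspace design, i.e., for every F_q-subspace W ⊆ F_q^m of F_q-dimension s, Σ_{i=1}^M dim_{F_h}(H_i ∩ W) ≤ 8s/ε. -/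
open Module

/-- Any two linearly independent finite families with the same index type are related by an
automorphism of the ambient vector space. -/
theorem LinearIndependent.exists_linearEquiv_apply_eq {K V ι : Type*} [DivisionRing K]
    [AddCommGroup V] [Module K V] [Finite ι] {v w : ι → V}
    (hv : LinearIndependent K v) (hw : LinearIndependent K w) :
    ∃ g : V ≃ₗ[K] V, ∀ i, g (v i) = w i := by
  have : FiniteDimensional K (Submodule.span K (Set.range v)) :=
    FiniteDimensional.span_of_finite K (Set.finite_range v)
  obtain ⟨g, hg⟩ := Submodule.exists_linearEquiv_restrict_eq
    ((Basis.span hv).equiv (Basis.span hw) (Equiv.refl ι))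
  refine ⟨g, fun i ↦ ?_⟩
  have h := hg (Basis.span hv i)
  rw [Basis.equiv_apply] at h
  simpa [Basis.span_apply] using h.symm

section Counting

variable {K V : Type*} [Field K] [AddCommGroup V] [Module K V]

/-- The number of `k`-dimensional subspaces containing a linearly independent family does not
depend on the family. -/
theorem card_submodule_finrank_eq_forall_mem_congr {ι : Type*} [Finite ι] (k : ℕ) {v w : ι → V}
    (hv : LinearIndependent K v) (hw : LinearIndependent K w) :
    Nat.card {H : Submodule K V // finrank K H = k ∧ ∀ i, v i ∈ H} =
      Nat.card {H : Submodule K V // finrank K H = k ∧ ∀ i, w i ∈ H} := by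
  obtain ⟨g, hg⟩ := hv.exists_linearEquiv_apply_eq hw
  refine Nat.card_congr ((Submodule.orderIsoMapComap g).toEquiv.subtypeEquiv fun H ↦ ?_)
  have hmem (i : ι) : w i ∈ H.map (g : V →ₗ[K] V) ↔ v i ∈ H := by
    rw [← hg i]
    exact g.injective.mem_set_image
  have hrank : finrank K (H.map (g : V →ₗ[K] V)) = finrank K H := LinearEquiv.finrank_map_eq g H
  change _ ↔ finrank K (H.map (g : V →ₗ[K] V)) = k ∧ ∀ i, w i ∈ H.map (g : V →ₗ[K] V)
  simp only [hmem, hrank]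

/-- If the dimensions of the intersections `W ⊓ H i` add up to at least `l`, then one can find `l`
labelled vectors of `W` such that those labelled `i` are linearly independent and lie in `H i`. -/
theorem exists_labelled_linearIndependent [FiniteDimensional K V] {ι : Type*} [Fintype ι]
    (W : Submodule K V) (H : ι → Submodule K V) {l : ℕ}
    (hl : l ≤ ∑ i, finrank K ↥(W ⊓ H i)) :
    ∃ f : Fin l → ι × W, ∀ i,
      LinearIndependent K (fun j : {j // (f j).1 = i} ↦ ((f j).2 : V)) ∧
        ∀ j : {j // (f j).1 = i}, ((f j).2 : V) ∈ H i := by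
  obtain ⟨σ⟩ : Nonempty (Fin l ↪ Σ i, Fin (finrank K ↥(W ⊓ H i))) :=
    Function.Embedding.nonempty_of_card_le (by simpa using hl)
  let b (i : ι) := finBasis K ↥(W ⊓ H i)
  refine ⟨fun j ↦ ((σ j).1, ⟨b (σ j).1 (σ j).2, (b (σ j).1 (σ j).2).2.1⟩), fun i ↦ ⟨?_, ?_⟩⟩
  · have hb : LinearIndependent K fun x ↦ (b i x : V) :=
      (b i).linearIndependent.map' (W ⊓ H i).subtype (W ⊓ H i).ker_subtype
    let τ (j : {j // (σ j).1 = i}) : Fin (finrank K ↥(W ⊓ H i)) :=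
      Fin.cast (by rw [j.2]) (σ j).2
    have hτ (j : {j // (σ j).1 = i}) : σ j = ⟨i, τ j⟩ := by
      obtain ⟨j, rfl⟩ := j
      rfl
    have hinj : Function.Injective τ := fun j j' h ↦
      Subtype.ext (σ.injective ((hτ j).trans ((congrArg (Sigma.mk i) h).trans (hτ j').symm)))
    convert hb.comp τ hinj using 2 with j
    simp only [Function.comp_apply]
    rw [hτ j]
  · rintro ⟨j, rfl⟩
    exact (b (σ j).1 (σ j).2).2.2

variable [Fintype K] [Finite V]

/-- Double counting of pairs consisting of a `k`-dimensional subspace and a linearly independent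
`a`-tuple of its elements. -/
theorem card_submodule_finrank_eq_mul_prod {a k : ℕ} (hak : a ≤ k) (hk : k ≤ finrank K V)
    {v : Fin a → V} (hv : LinearIndependent K v) :
    Nat.card {H : Submodule K V // finrank K H = k ∧ ∀ i, v i ∈ H} *
        ∏ i : Fin a, (Fintype.card K ^ finrank K V - Fintype.card K ^ i.val) =
      Nat.card {H : Submodule K V // finrank K H = k} *
        ∏ i : Fin a, (Fintype.card K ^ k - Fintype.card K ^ i.val) := by
  have := Fintype.ofFinite {w : Fin a → V // LinearIndependent K w}
  have := Fintype.ofFinite {H : Submodule K V // finrank K H = k}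
  have hleft : Nat.card (Σ w : {w : Fin a → V // LinearIndependent K w},
      {H : Submodule K V // finrank K H = k ∧ ∀ i, w.1 i ∈ H}) =
      Nat.card {H : Submodule K V // finrank K H = k ∧ ∀ i, v i ∈ H} *
        ∏ i : Fin a, (Fintype.card K ^ finrank K V - Fintype.card K ^ i.val) := by
    rw [Nat.card_sigma, Finset.sum_congr rfl fun w _ ↦
      card_submodule_finrank_eq_forall_mem_congr k w.2 hv, Finset.sum_const, smul_eq_mul,
      Finset.card_univ, ← Nat.card_eq_fintype_card, card_linearIndependent (hak.trans hk), mul_comm]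
  have hright : Nat.card (Σ H : {H : Submodule K V // finrank K H = k},
      {w : Fin a → H.1 // LinearIndependent K w}) =
      Nat.card {H : Submodule K V // finrank K H = k} *
        ∏ i : Fin a, (Fintype.card K ^ k - Fintype.card K ^ i.val) := by
    have hcard (H : {H : Submodule K V // finrank K H = k}) :
        Nat.card {w : Fin a → H.1 // LinearIndependent K w} =
          ∏ i : Fin a, (Fintype.card K ^ k - Fintype.card K ^ i.val) := by
      rw [card_linearIndependent (hak.trans H.2.ge), H.2]
    rw [Nat.card_sigma, Finset.sum_congr rfl fun H _ ↦ hcard H, Finset.sum_const, smul_eq_mul,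
      Finset.card_univ, Nat.card_eq_fintype_card]
  rw [← hleft, ← hright]
  exact Nat.card_congr
    { toFun := fun p ↦ ⟨⟨p.2.1, p.2.2.1⟩, fun i ↦ ⟨p.1.1 i, p.2.2.2 i⟩,
        LinearIndependent.of_comp p.2.1.subtype p.1.2⟩
      invFun := fun p ↦ ⟨⟨fun i ↦ p.2.1 i, p.2.2.map' p.1.1.subtype p.1.1.ker_subtype⟩,
        p.1.1, p.1.2, fun i ↦ (p.2.1 i).2⟩
      left_inv := fun _ ↦ rfl
      right_inv := fun _ ↦ rfl }

/-- A uniformly random `k`-dimensional subspace contains a fixed linearly independent family of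
size `a` with probability at most `q ^ (-(n - k) * a)`. -/
theorem card_submodule_finrank_eq_forall_mem_mul_pow_le {ι : Type*} [Fintype ι] (k : ℕ)
    {v : ι → V} (hv : LinearIndependent K v) :
    Nat.card {H : Submodule K V // finrank K H = k ∧ ∀ i, v i ∈ H} *
        Fintype.card K ^ ((finrank K V - k) * Fintype.card ι) ≤
      Nat.card {H : Submodule K V // finrank K H = k} := by
  rcases isEmpty_or_nonempty {H : Submodule K V // finrank K H = k ∧ ∀ i, v i ∈ H} with h | h
  · simp
  obtain ⟨H, hH, hvH⟩ := h
  have hk : k ≤ finrank K V := hH ▸ H.finrank_le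
  have hak : Fintype.card ι ≤ k := by
    have hv' : LinearIndependent K fun i ↦ (⟨v i, hvH i⟩ : H) :=
      LinearIndependent.of_comp H.subtype hv
    exact hH ▸ hv'.fintype_card_le_finrank
  have hq : 1 < Fintype.card K := Fintype.one_lt_card
  have key := card_submodule_finrank_eq_mul_prod hak hk
    (hv.comp _ (Fintype.equivFin ι).symm.injective)
  have hmem (H : Submodule K V) :
      (∀ i, (v ∘ (Fintype.equivFin ι).symm) i ∈ H) ↔ ∀ i, v i ∈ H :=
    (Fintype.equivFin ι).symm.forall_congr_right (q := fun i ↦ v i ∈ H)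
  simp only [hmem] at key
  have hpos : 0 < ∏ i : Fin (Fintype.card ι),
      (Fintype.card K ^ finrank K V - Fintype.card K ^ i.val) :=
    Finset.prod_pos fun i _ ↦ Nat.sub_pos_of_lt
      (Nat.pow_lt_pow_right hq (i.2.trans_le (hak.trans hk)))
  refine le_of_mul_le_mul_right ?_ hpos
  rw [mul_right_comm, key, mul_assoc]
  refine Nat.mul_le_mul_left _ ?_
  have hpow : Fintype.card K ^ ((finrank K V - k) * Fintype.card ι) =
      ∏ _i : Fin (Fintype.card ι), Fintype.card K ^ (finrank K V - k) := by
    simp [pow_mul]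
  rw [hpow, ← Finset.prod_mul_distrib]
  refine Finset.prod_le_prod' fun i _ ↦ ?_
  rw [Nat.sub_mul, ← pow_add, Nat.add_sub_cancel' hk]
  exact Nat.sub_le_sub_left (Nat.le_mul_of_pos_right _ (by positivity)) _

/-- Union bound: if each event `P i` has at most `A / B` elements, then their union has at most
`|ι| * A / B` elements. -/
theorem card_subtype_exists_mul_le {ι α : Type*} [Finite ι] [Finite α] {P : ι → α → Prop}
    {A B : ℕ} (h : ∀ i, Nat.card {x // P i x} * B ≤ A) :
    Nat.card {x // ∃ i, P i x} * B ≤ Nat.card ι * A := by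
  have := Fintype.ofFinite ι
  have hsurj : Function.Surjective fun p : Σ i, {x // P i x} ↦
      (⟨p.2.1, p.1, p.2.2⟩ : {x // ∃ i, P i x}) :=
    fun ⟨x, i, hx⟩ ↦ ⟨⟨i, x, hx⟩, rfl⟩
  calc Nat.card {x // ∃ i, P i x} * B
      ≤ Nat.card (Σ i, {x // P i x}) * B :=
        Nat.mul_le_mul_right _ (Nat.card_le_card_of_surjective _ hsurj)
    _ = ∑ i, Nat.card {x // P i x} * B := by rw [Nat.card_sigma, Finset.sum_mul]
    _ ≤ ∑ _i : ι, A := Finset.sum_le_sum fun i _ ↦ h i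
    _ = Nat.card ι * A := by simp

/-- A random tuple of `k`-dimensional subspaces meets a fixed subspace `W` in total dimension at
least `l` with probability at most `(|ι| * q ^ dim W / q ^ (n - k)) ^ l`. -/
theorem card_le_sum_finrank_inf_mul_pow_le {ι : Type*} [Fintype ι] (W : Submodule K V)
    (k l : ℕ) :
    Nat.card {H : ι → Submodule K V //
        (∀ i, finrank K (H i) = k) ∧ l ≤ ∑ i, finrank K ↥(W ⊓ H i)} *
        Fintype.card K ^ ((finrank K V - k) * l) ≤
      (Fintype.card ι * Fintype.card K ^ finrank K W) ^ l *
        Nat.card {H : ι → Submodule K V // ∀ i, finrank K (H i) = k} := by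
  classical
  have hW : Nat.card (Fin l → ι × W) = (Fintype.card ι * Fintype.card K ^ finrank K W) ^ l := by
    have := Fintype.ofFinite W
    simp [Module.card_eq_pow_finrank (K := K) (V := W)]
  rw [← hW]
  let P (f : Fin l → ι × W) (i : ι) (U : Submodule K V) : Prop :=
    finrank K U = k ∧ LinearIndependent K (fun j : {j // (f j).1 = i} ↦ ((f j).2 : V)) ∧
      ∀ j : {j // (f j).1 = i}, ((f j).2 : V) ∈ U
  have hexists (H : ι → Submodule K V)
      (hH : (∀ i, finrank K (H i) = k) ∧ l ≤ ∑ i, finrank K ↥(W ⊓ H i)) :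
      ∃ f, ∀ i, P f i (H i) := by
    obtain ⟨f, hf⟩ := exists_labelled_linearIndependent W H hH.2
    exact ⟨f, fun i ↦ ⟨hH.1 i, hf i⟩⟩
  refine (Nat.mul_le_mul_right _ (Nat.card_le_card_of_injective _
    (Subtype.impEmbedding _ _ hexists).injective)).trans (card_subtype_exists_mul_le fun f ↦ ?_)
  have hl : l = ∑ i, Fintype.card {j // (f j).1 = i} := by
    rw [← Fintype.card_sigma, Fintype.card_congr (Equiv.sigmaFiberEquiv fun j ↦ (f j).1),
      Fintype.card_fin]
  have hpi (Q : ι → Submodule K V → Prop) :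
      Nat.card {H : ι → Submodule K V // ∀ i, Q i (H i)} = ∏ i, Nat.card {U // Q i U} := by
    rw [← Nat.card_pi]
    exact Nat.card_congr Equiv.subtypePiEquivPi
  have hpow : Fintype.card K ^ ((finrank K V - k) * l) =
      ∏ i, Fintype.card K ^ ((finrank K V - k) * Fintype.card {j // (f j).1 = i}) := by
    rw [Finset.prod_pow_eq_pow_sum, ← Finset.mul_sum, ← hl]
  rw [hpi (P f), hpi fun _ U ↦ finrank K U = k, hpow, ← Finset.prod_mul_distrib]
  refine Finset.prod_le_prod' fun i _ ↦ ?_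
  by_cases hi : LinearIndependent K (fun j : {j // (f j).1 = i} ↦ ((f j).2 : V))
  · simpa only [P, hi, true_and] using card_submodule_finrank_eq_forall_mem_mul_pow_le k hi
  · simp [P, hi]

/-- There are at most `q ^ (n * s)` subspaces of dimension `s`. -/
theorem card_submodule_finrank_eq_le (s : ℕ) :
    Nat.card {W : Submodule K V // finrank K W = s} ≤
      Fintype.card K ^ (finrank K V * s) := by
  have := Fintype.ofFinite V
  have hcard : Nat.card (Fin s → V) = Fintype.card K ^ (finrank K V * s) := by
    simp [Module.card_eq_pow_finrank (K := K) (V := V), pow_mul]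
  rw [← hcard]
  let b (W : {W : Submodule K V // finrank K W = s}) : Basis (Fin s) K W.1 :=
    finBasisOfFinrankEq K W.1 W.2
  have hspan (W : {W : Submodule K V // finrank K W = s}) :
      Submodule.span K (Set.range fun i ↦ (b W i : V)) = W.1 := by
    have h := congrArg (Submodule.map W.1.subtype) (b W).span_eq
    rwa [Submodule.map_span, ← Set.range_comp, Submodule.map_subtype_top] at h
  refine Nat.card_le_card_of_injective (fun W i ↦ (b W i : V)) fun W W' h ↦ Subtype.ext ?_
  rw [← hspan W, ← hspan W']
  exact congrArg (fun v ↦ Submodule.span K (Set.range v)) h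

end Counting

/-- Existence of random subspace designs. Let `q = h^t`, `ε ∈ (0,1)`,
`s < εm/2`, and suppose `c := εtm` and `e := εtm/8` are integers; set `M = h^e`. Among all
`M`-tuples of `F_h`-subspaces of `F_q^m` of `F_h`-codimension `c` (i.e., `F_h`-dimension
`tm - c`), the fraction of tuples failing to be an `(s, 8s/ε, t)` `F_h`-subspace design is at
most `q^{-ms}`; i.e., a uniformly random independent choice is a design with probability at
least `1 - q^{-ms}`. -/
theorem stmt_5 (Fh Fq : Type) [Field Fh] [Fintype Fh] [Field Fq] [Fintype Fq]
    [Algebra Fh Fq] (ε : ℝ) (hε0 : 0 < ε) (hε1 : ε < 1)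
    (t m s : ℕ) (ht : 0 < t) (hm : 0 < m) (hs : 0 < s)
    (hsm : (s : ℝ) < ε * m / 2)
    (hq : Fintype.card Fq = Fintype.card Fh ^ t)
    (c e : ℕ) (hc : (c : ℝ) = ε * (t * m)) (he : (8 * e : ℝ) = ε * (t * m))
    (M : ℕ) (hM : M = Fintype.card Fh ^ e) :
    (Nat.card {H : Fin M → Submodule Fh (Fin m → Fq) //
        (∀ i, Module.finrank Fh (H i) = t * m - c) ∧
        ¬ (∀ W : Submodule Fq (Fin m → Fq), Module.finrank Fq W = s →
            ((∑ i, Module.finrank Fh ↥((W.restrictScalars Fh) ⊓ H i) : ℕ) : ℝ)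
              ≤ 8 * s / ε)} : ℝ)
      ≤ ((Fintype.card Fq : ℝ) ^ (m * s))⁻¹ *
        (Nat.card {H : Fin M → Submodule Fh (Fin m → Fq) //
          ∀ i, Module.finrank Fh (H i) = t * m - c} : ℝ) := by
  classical
  have hh : 1 < Fintype.card Fh := Fintype.one_lt_card
  have hdimFq : finrank Fh Fq = t := by
    have h := Module.card_eq_pow_finrank (K := Fh) (V := Fq)
    rw [hq] at h
    exact (Nat.pow_right_injective hh h).symm
  have hdim : finrank Fh (Fin m → Fq) = t * m := by
    rw [finrank_pi_fintype]
    simp [hdimFq, mul_comm]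
  have hcN : c ≤ t * m := by
    have : (c : ℝ) ≤ ((t * m : ℕ) : ℝ) := by
      rw [hc]
      push_cast
      exact mul_le_of_le_one_left (by positivity) hε1.le
    exact_mod_cast this
  have hce : c = 8 * e := by
    have : (c : ℝ) = ((8 * e : ℕ) : ℝ) := by
      push_cast
      rw [hc, he]
    exact_mod_cast this
  have hts : t * s ≤ 4 * e := by
    have ht' : (0 : ℝ) < t := by exact_mod_cast ht
    have : ((t * s : ℕ) : ℝ) ≤ ((4 * e : ℕ) : ℝ) := by
      push_cast
      nlinarith
    exact_mod_cast this
  obtain ⟨l, hl⟩ : ∃ l, l = ⌊8 * (s : ℝ) / ε⌋₊ + 1 := ⟨_, rfl⟩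
  have hel : t * m * s ≤ e * l := by
    have hlt : 8 * (s : ℝ) / ε < l := by
      simpa [hl] using Nat.lt_floor_add_one (8 * (s : ℝ) / ε)
    have : ((t * m * s : ℕ) : ℝ) ≤ ((e * l : ℕ) : ℝ) := by
      push_cast
      rw [div_lt_iff₀ hε0] at hlt
      have h0 : (0 : ℝ) ≤ t * m := by positivity
      nlinarith
    exact_mod_cast this
  let G : ℕ := Nat.card {H : Fin M → Submodule Fh (Fin m → Fq) //
    ∀ i, finrank Fh (H i) = t * m - c}
  let P (W : {W : Submodule Fq (Fin m → Fq) // finrank Fq W = s})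
      (H : Fin M → Submodule Fh (Fin m → Fq)) : Prop :=
    (∀ i, finrank Fh (H i) = t * m - c) ∧
      l ≤ ∑ i, finrank Fh ↥((W.1.restrictScalars Fh) ⊓ H i)
  have hP (W : {W : Submodule Fq (Fin m → Fq) // finrank Fq W = s}) :
      Nat.card {H // P W H} * Fintype.card Fh ^ (c * l) ≤
        (M * Fintype.card Fh ^ (t * s)) ^ l * G := by
    have hW : finrank Fh (W.1.restrictScalars Fh) = t * s := by
      have h := finrank_mul_finrank Fh Fq W.1
      rw [hdimFq, W.2] at h
      exact h.symm
    have h := card_le_sum_finrank_inf_mul_pow_le (ι := Fin M) (W.1.restrictScalars Fh)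
      (t * m - c) l
    rwa [hW, hdim, Nat.sub_sub_self hcN, Fintype.card_fin] at h
  have hbad (H : Fin M → Submodule Fh (Fin m → Fq))
      (hH : (∀ i, finrank Fh (H i) = t * m - c) ∧
        ¬ (∀ W : Submodule Fq (Fin m → Fq), finrank Fq W = s →
            ((∑ i, finrank Fh ↥((W.restrictScalars Fh) ⊓ H i) : ℕ) : ℝ) ≤ 8 * s / ε)) :
      ∃ W, P W H := by
    obtain ⟨hH, hW⟩ := hH
    push Not at hW
    obtain ⟨W, hWs, hW⟩ := hW
    exact ⟨⟨W, hWs⟩, hH, hl ▸ Nat.succ_le_of_lt ((Nat.floor_lt (by positivity)).2 hW)⟩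
  have hcardW : Nat.card {W : Submodule Fq (Fin m → Fq) // finrank Fq W = s} ≤
      Fintype.card Fh ^ (t * m * s) := by
    have h := card_submodule_finrank_eq_le (K := Fq) (V := Fin m → Fq) s
    rwa [hq, finrank_fin_fun, ← pow_mul, ← mul_assoc] at h
  have hunion : Nat.card {H // ∃ W, P W H} * Fintype.card Fh ^ (c * l) ≤
      Fintype.card Fh ^ (t * m * s + (e + t * s) * l) * G := by
    refine (card_subtype_exists_mul_le hP).trans ?_
    rw [← mul_assoc, pow_add, pow_mul _ _ l, pow_add _ e, hM]
    gcongr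
  have hexp : t * m * s + (t * m * s + (e + t * s) * l) ≤ c * l := by
    have h := Nat.mul_le_mul_right l hts
    rw [hce]
    nlinarith
  have hmain : Nat.card {H // ∃ W, P W H} * Fintype.card Fh ^ (t * m * s) ≤ G := by
    have hpos : 0 < Fintype.card Fh ^ (t * m * s + (e + t * s) * l) := by positivity
    refine le_of_mul_le_mul_left ?_ hpos
    refine le_trans ?_ hunion
    rw [mul_left_comm, ← pow_add, add_comm]
    gcongr
    exact hh.le
  have hsub := Nat.card_le_card_of_injective _ (Subtype.impEmbedding _ _ hbad).injective
  have hqpow : (Fintype.card Fq : ℝ) ^ (m * s) = (Fintype.card Fh ^ (t * m * s) : ℕ) := by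
    rw [hq]
    push_cast
    rw [← pow_mul, mul_assoc]
  rw [hqpow, inv_mul_eq_div, le_div_iff₀ (by positivity)]
  exact_mod_cast (Nat.mul_le_mul_right _ hsub).trans hmain
end

section
/- Let q be a prime power, let 1 ≤ s ≤ m be integers, let γ_1,…,γ_m be distinct elements of F_q^*, and let d_1 > d_2 > ⋯ > d_m ≥ 1 be integers. For i = 1,…,s define f_i(x_1,…,x_m) = Σ_{j=1}^m γ_j^i · x_j^{d_j}, and let V = {x ∈ (F̄_q)^m : f_1(x) = ⋯ = f_s(x) = 0}, where F̄_q is an algebraic closure of F_q. Then for every affine subspace H ⊆ (F̄_q)^m of dimension s, |V ∩ H| ≤ (d_1)^s. -/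
/-- Greedy selection of a basis: scanning a finite set in increasing order, one keeps the indices
whose vector is not in the span of the earlier kept ones. -/
theorem exists_linearIndepOn_forall_mem_span_lt {ι K V : Type*} [LinearOrder ι] [Field K]
    [AddCommGroup V] [Module K V] (φ : ι → V) (s : Finset ι) :
    ∃ P ⊆ s, LinearIndepOn K φ (P : Set ι) ∧
      ∀ j ∈ s, j ∉ P → φ j ∈ Submodule.span K (φ '' {p | p ∈ P ∧ p < j}) := by
  induction s using Finset.induction_on_max with
  | empty => exact ⟨∅, by simp, by simp, by simp⟩
  | insert a s has ih =>
    obtain ⟨P, hPs, hP, hspan⟩ := ih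
    by_cases ha : φ a ∈ Submodule.span K (φ '' (P : Set ι))
    · refine ⟨P, hPs.trans (Finset.subset_insert _ _), hP, fun j hj hjP => ?_⟩
      rcases Finset.mem_insert.1 hj with rfl | hj
      · refine Submodule.span_mono (Set.image_mono fun p hp => ?_) ha
        exact ⟨hp, has p (hPs hp)⟩
      · exact hspan j hj hjP
    · refine ⟨insert a P, Finset.insert_subset_insert _ hPs, ?_, fun j hj hjP => ?_⟩
      · rw [Finset.coe_insert]
        exact hP.insert ha
      · rw [Finset.mem_insert, not_or] at hjP
        refine Submodule.span_mono (Set.image_mono fun p hp => ?_)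
          (hspan j ((Finset.mem_insert.1 hj).resolve_left hjP.1) hjP.2)
        exact ⟨Finset.mem_insert_of_mem hp.1, hp.2⟩

section Weight

variable {K A ι : Type*} [Field K] [CommRing A] [Algebra K A] [Fintype ι]

variable (K) in
/-- The span of the monomials in the family `t` of weighted degree at most `n`. -/
def weightLE (t : ι → A) (w : ι → ℕ) (n : ℕ) : Submodule K A :=
  Submodule.span K {a | ∃ e : ι → ℕ, ∑ i, w i * e i ≤ n ∧ a = ∏ i, t i ^ e i}

variable (t : ι → A) (w : ι → ℕ)

theorem prod_pow_mem_weightLE {n : ℕ} (e : ι → ℕ) (he : ∑ i, w i * e i ≤ n) :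
    ∏ i, t i ^ e i ∈ weightLE K t w n :=
  Submodule.subset_span ⟨e, he, rfl⟩

theorem weightLE_mono {a b : ℕ} (h : a ≤ b) : weightLE K t w a ≤ weightLE K t w b :=
  Submodule.span_mono fun _ ⟨e, he, hx⟩ => ⟨e, he.trans h, hx⟩

theorem one_mem_weightLE (n : ℕ) : (1 : A) ∈ weightLE K t w n := by
  simpa using prod_pow_mem_weightLE (K := K) t w (n := n) 0 (by simp)

theorem self_mem_weightLE {n : ℕ} (i : ι) (h : w i ≤ n) : t i ∈ weightLE K t w n := by
  classical
  simpa [Pi.single_apply] using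
    prod_pow_mem_weightLE (K := K) t w (n := n) (Pi.single i 1) (by simpa [Pi.single_apply] using h)

theorem mul_mem_weightLE {a b : ℕ} {x y : A} (hx : x ∈ weightLE K t w a)
    (hy : y ∈ weightLE K t w b) : x * y ∈ weightLE K t w (a + b) := by
  have h : weightLE K t w a * weightLE K t w b ≤ weightLE K t w (a + b) := by
    rw [weightLE, weightLE, Submodule.span_mul_span, Submodule.span_le]
    rintro _ ⟨_, ⟨e, he, rfl⟩, _, ⟨f, hf, rfl⟩, rfl⟩
    refine Submodule.subset_span ⟨e + f, ?_, ?_⟩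
    · simpa [mul_add, Finset.sum_add_distrib] using add_le_add he hf
    · simp [pow_add, Finset.prod_mul_distrib]
  exact h (Submodule.mul_mem_mul hx hy)

theorem pow_mem_weightLE {a : ℕ} {x : A} (hx : x ∈ weightLE K t w a) (k : ℕ) :
    x ^ k ∈ weightLE K t w (a * k) := by
  induction k with
  | zero => simpa using one_mem_weightLE t w 0
  | succ k ih => simpa [pow_succ, mul_add] using mul_mem_weightLE t w ih hx

theorem weightLE_le_adjoin (n : ℕ) :
    weightLE K t w n ≤ Subalgebra.toSubmodule (Algebra.adjoin K (Set.range t)) := by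
  refine Submodule.span_le.2 ?_
  rintro _ ⟨e, -, rfl⟩
  exact Subalgebra.prod_mem _ fun i _ =>
    Subalgebra.pow_mem _ (Algebra.subset_adjoin (Set.mem_range_self i)) _

variable {t w}

/-- If every `t i ^ D i` reduces to monomials of smaller weight, then every monomial reduces to
those with exponents less than `D`. -/
theorem prod_pow_mem_span_reduced {D : ι → ℕ}
    (h : ∀ i, ∃ n < w i * D i, t i ^ D i ∈ weightLE K t w n) (e : ι → ℕ) :
    ∏ i, t i ^ e i ∈ Submodule.span K
      (Set.range fun f : (∀ i, Fin (D i)) => ∏ i, t i ^ (f i : ℕ)) := by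
  classical
  induction hN : ∑ i, w i * e i using Nat.strong_induction_on generalizing e with
  | _ N ih =>
    by_cases he : ∀ i, e i < D i
    · exact Submodule.subset_span ⟨fun i => ⟨e i, he i⟩, rfl⟩
    push Not at he
    obtain ⟨k, hk⟩ := he
    obtain ⟨n, hn, hmem⟩ := h k
    have hsplit : e = (e - Pi.single k (D k)) + Pi.single k (D k) := by
      refine (tsub_add_cancel_of_le fun i => ?_).symm
      by_cases hik : i = k
      · subst hik; simpa using hk
      · simp [hik]
    set g := e - Pi.single k (D k)
    have hw : ∑ i, w i * e i = ∑ i, w i * g i + w k * D k := by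
      rw [hsplit]
      simp [mul_add, Finset.sum_add_distrib, Pi.single_apply]
    have hprod : ∏ i, t i ^ e i = (∏ i, t i ^ g i) * t k ^ D k := by
      rw [hsplit]
      simp only [Pi.add_apply, pow_add, Finset.prod_mul_distrib]
      simp [Pi.single_apply]
    have hle : weightLE K t w (∑ i, w i * g i + n) ≤ Submodule.span K
        (Set.range fun f : (∀ i, Fin (D i)) => ∏ i, t i ^ (f i : ℕ)) := by
      refine Submodule.span_le.2 ?_
      rintro _ ⟨f, hf, rfl⟩
      exact ih _ (by omega) f rfl
    rw [hprod]
    exact hle (mul_mem_weightLE t w (prod_pow_mem_weightLE t w g le_rfl) hmem)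

theorem adjoin_eq_span_reduced {D : ι → ℕ}
    (h : ∀ i, ∃ n < w i * D i, t i ^ D i ∈ weightLE K t w n) :
    Subalgebra.toSubmodule (Algebra.adjoin K (Set.range t)) = Submodule.span K
      (Set.range fun f : (∀ i, Fin (D i)) => ∏ i, t i ^ (f i : ℕ)) := by
  classical
  apply le_antisymm
  · rw [Algebra.adjoin_eq_span, Submodule.span_le]
    intro x hx
    obtain ⟨e, rfl⟩ : ∃ e : ι → ℕ, x = ∏ i, t i ^ e i := by
      induction hx using Submonoid.closure_induction with
      | mem x hx =>
        obtain ⟨i, rfl⟩ := hx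
        exact ⟨Pi.single i 1, by simp [Pi.single_apply]⟩
      | one => exact ⟨0, by simp⟩
      | mul x y _ _ hx hy =>
        obtain ⟨e, rfl⟩ := hx
        obtain ⟨f, rfl⟩ := hy
        exact ⟨e + f, by simp [pow_add, Finset.prod_mul_distrib]⟩
    exact prod_pow_mem_span_reduced h e
  · refine Submodule.span_le.2 ?_
    rintro _ ⟨f, rfl⟩
    exact Subalgebra.prod_mem _ fun i _ =>
      Subalgebra.pow_mem _ (Algebra.subset_adjoin (Set.mem_range_self i)) _

end Weight

/-- A subalgebra of functions that separates points bounds the number of points by its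
dimension. -/
theorem finite_and_natCard_le_finrank_of_separatesPoints {K S : Type*} [Field K]
    (B : Subalgebra K (S → K)) [Module.Finite K B]
    (hB : ∀ x y : S, (∀ f ∈ B, f x = f y) → x = y) :
    Finite S ∧ Nat.card S ≤ Module.finrank K B := by
  let ev : S → (B →ₐ[K] K) := fun x => (Pi.evalAlgHom K (fun _ : S => K) x).comp B.val
  have hev : Function.Injective ev := fun x y hxy =>
    hB x y fun f hf => DFunLike.congr_fun hxy ⟨f, hf⟩
  exact ⟨Finite.of_injective ev hev,
    (Nat.card_le_card_of_injective ev hev).trans (card_algHom_le_finrank K B K)⟩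

/-- A submodule containing all the combinations of a family given by an invertible matrix contains
the family. -/
theorem mem_of_forall_sum_smul_mem {K M n : Type*} [Field K] [AddCommGroup M] [Module K M]
    [Fintype n] [DecidableEq n] (F : Submodule K M) (A : Matrix n n K) (hA : A.det ≠ 0)
    (y : n → M) (h : ∀ i, ∑ k, A i k • y k ∈ F) (k : n) : y k ∈ F := by
  have hinv : A⁻¹ * A = 1 := Matrix.nonsing_inv_mul A (isUnit_iff_ne_zero.2 hA)
  have hy : y k = ∑ i, A⁻¹ k i • ∑ l, A i l • y l := by
    simp_rw [Finset.smul_sum, smul_smul]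
    rw [Finset.sum_comm]
    simp_rw [← Finset.sum_smul, ← Matrix.mul_apply, hinv, Matrix.one_apply]
    simp
  rw [hy]
  exact F.sum_mem fun i _ => F.smul_mem _ (h i)

/-- A Vandermonde system with distinct nonzero nodes can be solved modulo a submodule. -/
theorem mem_of_forall_sum_pow_smul_mem {K M ι : Type*} [Field K] [AddCommGroup M] [Module K M]
    [Fintype ι] (F : Submodule K M) (c : ι → K) (hc : Function.Injective c) (hc0 : ∀ k, c k ≠ 0)
    (y : ι → M) (h : ∀ i < Fintype.card ι, ∑ k, c k ^ (i + 1) • y k ∈ F) (k : ι) : y k ∈ F := by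
  let σ := Fintype.equivFin ι
  have hF : ∀ i, c (σ.symm i) • y (σ.symm i) ∈ F := by
    refine mem_of_forall_sum_smul_mem F (Matrix.vandermonde (c ∘ σ.symm)).transpose ?_ _
      fun i => ?_
    · rw [Matrix.det_transpose, Matrix.det_vandermonde_ne_zero_iff]
      exact hc.comp σ.symm.injective
    · convert h i i.2 using 1
      rw [← Equiv.sum_comp σ.symm]
      simp [Matrix.vandermonde_apply, smul_smul, pow_succ]
  have := hF (σ k)
  rw [Equiv.symm_apply_apply] at this
  exact (F.smul_mem_iff (hc0 k)).1 this

/-- The bound for diagonal systems over an arbitrary field. -/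
theorem finite_and_natCard_le_pow {K : Type*} [Field K] {s m : ℕ} (c : Fin m → K)
    (hc : Function.Injective c) (hc0 : ∀ j, c j ≠ 0) (d : Fin m → ℕ) (hd : StrictAnti d)
    (hd1 : ∀ j, 1 ≤ d j) {N : ℕ} (hN : ∀ j, d j ≤ N) (hN1 : 1 ≤ N)
    (W : Submodule K (Fin m → K)) (hW : Module.finrank K W = s) (v : Fin m → K)
    (S : Set (Fin m → K)) (hS : ∀ x ∈ S, ∀ i < s, ∑ j, c j ^ (i + 1) * x j ^ d j = 0)
    (hSW : ∀ x ∈ S, x - v ∈ W) : S.Finite ∧ Nat.card S ≤ N ^ s := by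
  classical
  let φ : Fin m → Module.Dual K W := fun j => (LinearMap.proj j).comp W.subtype
  obtain ⟨P, -, hP, hspan⟩ :=
    exists_linearIndepOn_forall_mem_span_lt (K := K) φ Finset.univ
  have hcard : P.card ≤ s := by
    have := hP.linearIndependent.fintype_card_le_finrank
    rw [Subspace.dual_finrank_eq, hW] at this
    simpa using this
  let X : Fin m → (S → K) := fun j x => x.1 j
  let t : P → (S → K) := fun p => X p
  let w : P → ℕ := fun p => (N + 1).factorial / d p
  have hdvd : ∀ j, (N + 1).factorial / d j * d j = (N + 1).factorial := fun j =>
    Nat.div_mul_cancel (Nat.dvd_factorial (hd1 j) ((hN j).trans (Nat.le_succ N)))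
  have hdvd' : ∀ j, (N + 1).factorial / (d j + 1) * (d j + 1) = (N + 1).factorial := fun j =>
    Nat.div_mul_cancel (Nat.dvd_factorial (Nat.succ_pos _) (Nat.succ_le_succ (hN j)))
  have hNpos : 0 < (N + 1).factorial := Nat.factorial_pos _
  -- Restriction of functionals on `W` to the points of `S`, translated by `v`.
  let L : Module.Dual K W →ₗ[K] (S → K) :=
    { toFun := fun ψ x => ψ ⟨x.1 - v, hSW x.1 x.2⟩
      map_add' := fun _ _ => rfl
      map_smul' := fun _ _ => rfl }
  have hL : ∀ j, L (φ j) = X j - v j • (1 : S → K) := fun j => by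
    ext x
    simp [L, φ, X]
  have hX : ∀ j ∉ P, X j ∈ weightLE K t w ((N + 1).factorial / (d j + 1)) := by
    intro j hj
    set F := weightLE K t w ((N + 1).factorial / (d j + 1))
    have h1 : (1 : S → K) ∈ F := one_mem_weightLE _ _ _
    have hle : Submodule.span K (φ '' {p | p ∈ P ∧ p < j}) ≤ F.comap L := by
      refine Submodule.span_le.2 ?_
      rintro _ ⟨p, ⟨hp, hpj⟩, rfl⟩
      change L (φ p) ∈ F
      rw [hL]
      exact F.sub_mem (self_mem_weightLE t w ⟨p, hp⟩
        (Nat.div_le_div_left (hd hpj) (Nat.succ_pos _))) (F.smul_mem _ h1)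
    have hmem : L (φ j) ∈ F := hle (hspan j (Finset.mem_univ j) hj)
    rw [hL] at hmem
    simpa using F.add_mem hmem (F.smul_mem (v j) h1)
  have hXpow : ∀ j ∉ P, X j ^ d j ∈ weightLE K t w ((N + 1).factorial - 1) := fun j hj => by
    refine weightLE_mono t w ?_ (pow_mem_weightLE t w (hX j hj) (d j))
    have := hdvd' j
    rw [mul_add, mul_one] at this
    have : 0 < (N + 1).factorial / (d j + 1) := Nat.pos_of_ne_zero fun h0 => by simp_all
    omega
  have hpivot : ∀ p : P, t p ^ d p ∈ weightLE K t w ((N + 1).factorial - 1) := by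
    refine mem_of_forall_sum_pow_smul_mem _ (fun p : P => c p)
      (hc.comp Subtype.val_injective) (fun p => hc0 p) _ fun i hi => ?_
    rw [Fintype.card_coe] at hi
    have hzero : ∑ j, c j ^ (i + 1) • X j ^ d j = 0 := by
      ext x
      simpa [X] using hS x.1 x.2 i (hi.trans_le hcard)
    rw [← Finset.sum_add_sum_compl P, add_eq_zero_iff_eq_neg] at hzero
    have hsum : ∑ p : P, c p ^ (i + 1) • t p ^ d p = ∑ j ∈ P, c j ^ (i + 1) • X j ^ d j :=
      Finset.sum_coe_sort P fun j => c j ^ (i + 1) • X j ^ d j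
    rw [hsum, hzero]
    exact Submodule.neg_mem _ <| Submodule.sum_mem _ fun j hj =>
      Submodule.smul_mem _ _ (hXpow j (Finset.mem_compl.1 hj))
  let B := Algebra.adjoin K (Set.range t)
  have hB : Subalgebra.toSubmodule B = _ := adjoin_eq_span_reduced (D := fun p : P => d p)
    fun p => ⟨(N + 1).factorial - 1, by simp only [w, hdvd]; omega, hpivot p⟩
  have hfin : Module.Finite K (Subalgebra.toSubmodule B) := by
    rw [hB]
    exact Module.Finite.span_of_finite K (Set.finite_range _)
  have : Module.Finite K B := hfin
  have hrank : Module.finrank K B ≤ N ^ s := by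
    calc Module.finrank K B = Module.finrank K (Subalgebra.toSubmodule B) := rfl
      _ ≤ Fintype.card (∀ p : P, Fin (d p)) := by
        rw [hB]
        exact finrank_range_le_card _
      _ = ∏ p : P, d p := by simp
      _ ≤ ∏ _p : P, N := Finset.prod_le_prod' fun p _ => hN p
      _ = N ^ P.card := by simp
      _ ≤ N ^ s := Nat.pow_le_pow_right hN1 hcard
  have hXB : ∀ j, X j ∈ B := fun j => by
    by_cases hj : j ∈ P
    · exact Algebra.subset_adjoin ⟨⟨j, hj⟩, rfl⟩
    · exact weightLE_le_adjoin t w _ (hX j hj)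
  obtain ⟨hSfin, hScard⟩ := finite_and_natCard_le_finrank_of_separatesPoints B
    fun x y hxy => Subtype.ext (funext fun j => hxy (X j) (hXB j))
  exact ⟨Set.toFinite S, hScard.trans hrank⟩

/-- Dvir–Lovett. Let `q` be a prime power, `1 ≤ s ≤ m`, `γ_1, …, γ_m`
distinct elements of `F_q^*`, and `d_1 > d_2 > ⋯ > d_m ≥ 1`. Define
`f_i(x) = Σ_j γ_j^i x_j^{d_j}` for `i = 1, …, s`, and let `V` be their common zero set in
`(F̄_q)^m`. Then `|V ∩ H| ≤ d_1^s` for every affine subspace `H ⊆ (F̄_q)^m` of dimension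
`s` (a coset `v + W` of an `s`-dimensional subspace `W`). -/
theorem stmt_6 (Fq : Type) [Field Fq] [Fintype Fq] (s m : ℕ) (hs : 1 ≤ s) (hsm : s ≤ m)
    (γ : Fin m → Fq) (hγinj : Function.Injective γ) (hγ0 : ∀ j, γ j ≠ 0)
    (d : Fin m → ℕ) (hd : StrictAnti d) (hd1 : ∀ j, 1 ≤ d j) (hm : 0 < m)
    (W : Submodule (AlgebraicClosure Fq) (Fin m → AlgebraicClosure Fq))
    (hW : Module.finrank (AlgebraicClosure Fq) W = s) (v : Fin m → AlgebraicClosure Fq) :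
    ({x : Fin m → AlgebraicClosure Fq | ∀ i : Fin s,
        ∑ j, (algebraMap Fq (AlgebraicClosure Fq) (γ j)) ^ ((i : ℕ) + 1) * x j ^ d j = 0}
      ∩ {x | x - v ∈ W}).Finite ∧
    Nat.card ↥({x : Fin m → AlgebraicClosure Fq | ∀ i : Fin s,
        ∑ j, (algebraMap Fq (AlgebraicClosure Fq) (γ j)) ^ ((i : ℕ) + 1) * x j ^ d j = 0}
      ∩ {x | x - v ∈ W}) ≤ d ⟨0, hm⟩ ^ s := by
  have hinj := (algebraMap Fq (AlgebraicClosure Fq)).injective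
  refine finite_and_natCard_le_pow (fun j => algebraMap Fq (AlgebraicClosure Fq) (γ j))
    (hinj.comp hγinj) (fun j => (map_ne_zero_iff _ hinj).2 (hγ0 j)) d hd hd1
    (fun j => hd.antitone (Fin.mk_le_of_le_val (Nat.zero_le _))) (hd1 _) W hW v _
    (fun x hx i hi => hx.1 ⟨i, hi⟩) (fun x hx => hx.2)
end

section
/- Let q be a prime power, let 1 ≤ s ≤ m be integers, let γ_1,…,γ_m be distinct elements of F_q^*, and let d_1 > d_2 > ⋯ > d_m ≥ 1 be integers such that at least s of d_1,…,d_m are coprime to q−1. For i = 1,…,s define f_i(x_1,…,x_m) = Σ_{j=1}^m γ_j^i · x_j^{d_j}. Then the number of points x ∈ F_q^m with f_1(x) = ⋯ = f_s(x) = 0 is exactly q^{m−s}. -/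
/-- Over a finite field with `q` elements, `x ↦ x ^ n` is injective when `n ≠ 0` is coprime
to `q - 1`. -/
theorem FiniteField.pow_injective_of_coprime {K : Type*} [Field K] [Fintype K] {n : ℕ}
    (hn : n ≠ 0) (hcop : n.Coprime (Fintype.card K - 1)) :
    Function.Injective fun x : K => x ^ n := by
  classical
  intro x y hxy
  change x ^ n = y ^ n at hxy
  by_cases hx : x = 0
  · subst hx
    rw [zero_pow hn] at hxy
    exact (pow_eq_zero_iff hn |>.mp hxy.symm).symm
  by_cases hy : y = 0
  · subst hy
    rw [zero_pow hn] at hxy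
    exact pow_eq_zero_iff hn |>.mp hxy
  have hcard : (Nat.card Kˣ).Coprime n := by
    rw [Nat.card_eq_fintype_card, Fintype.card_units]
    exact hcop.symm
  have hunits : Units.mk0 x hx = Units.mk0 y hy :=
    (powCoprime hcard).injective (Units.ext (by simpa using hxy))
  exact congrArg Units.val hunits

/-- A weighted Vandermonde system in coordinatewise injective powers is bijective. -/
theorem FiniteField.bijective_sum_pow_mul_pow {K : Type*} [Field K] [Fintype K] {s : ℕ}
    {γ : Fin s → K} (hinj : Function.Injective γ) (h0 : ∀ k, γ k ≠ 0) {d : Fin s → ℕ}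
    (hd : ∀ k, d k ≠ 0) (hcop : ∀ k, (d k).Coprime (Fintype.card K - 1)) :
    Function.Bijective fun (v : Fin s → K) (i : Fin s) =>
      ∑ k, γ k ^ ((i : ℕ) + 1) * v k ^ d k := by
  refine Finite.injective_iff_bijective.mp fun v w hvw => ?_
  have hzero : (fun k => γ k * (v k ^ d k - w k ^ d k)) = 0 := by
    refine Matrix.eq_zero_of_forall_pow_sum_mul_pow_eq_zero hinj fun i => ?_
    rw [← sub_eq_zero.mpr (congrFun hvw i), ← Finset.sum_sub_distrib]
    exact Finset.sum_congr rfl fun k _ => by ring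
  funext k
  have hk := (mul_eq_zero.mp (congrFun hzero k)).resolve_left (h0 k)
  exact pow_injective_of_coprime (hd k) (hcop k) (sub_eq_zero.mp hk)

/-- Dvir–Lovett, rational point count. Let `q` be a prime power,
`1 ≤ s ≤ m`, `γ_1, …, γ_m` distinct elements of `F_q^*`, and `d_1 > ⋯ > d_m ≥ 1` with at
least `s` of the `d_j` coprime to `q - 1`. Define `f_i(x) = Σ_j γ_j^i x_j^{d_j}` for
`i = 1, …, s`. Then the number of common zeros of `f_1, …, f_s` in `F_q^m` is exactly
`q^(m-s)`. -/
theorem stmt_7 (Fq : Type) [Field Fq] [Fintype Fq] (s m : ℕ) (hs : 1 ≤ s) (hsm : s ≤ m)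
    (γ : Fin m → Fq) (hγinj : Function.Injective γ) (hγ0 : ∀ j, γ j ≠ 0)
    (d : Fin m → ℕ) (hd : StrictAnti d) (hd1 : ∀ j, 1 ≤ d j)
    (hcop : ∃ T : Finset (Fin m), s ≤ T.card ∧
      ∀ j ∈ T, Nat.Coprime (d j) (Fintype.card Fq - 1)) :
    Nat.card {x : Fin m → Fq // ∀ i : Fin s,
        ∑ j, (γ j) ^ ((i : ℕ) + 1) * x j ^ d j = 0}
      = Fintype.card Fq ^ (m - s) := by
  classical
  obtain ⟨T, hT, hTcop⟩ := hcop
  obtain ⟨S, hST, hS⟩ := Finset.exists_subset_card_eq hT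
  let e : Fin s ≃ {j // j ∈ S} := (S.equivFinOfCardEq hS).symm
  have hbij := FiniteField.bijective_sum_pow_mul_pow (γ := fun k => γ (e k))
    (hγinj.comp (Subtype.val_injective.comp e.injective)) (fun k => hγ0 _)
    (d := fun k => d (e k)) (fun k => Nat.one_le_iff_ne_zero.mp (hd1 _))
    (fun k => hTcop _ (hST (e k).2))
  have hsplit (x : Fin m → Fq) (i : Fin s) :
      ∑ j, γ j ^ ((i : ℕ) + 1) * x j ^ d j =
        ∑ k, γ (e k) ^ ((i : ℕ) + 1) * x (e k) ^ d (e k) +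
          ∑ j : {j // j ∉ S}, γ j ^ ((i : ℕ) + 1) * x j ^ d j := by
    rw [Equiv.sum_comp e fun j : {j // j ∈ S} => γ j ^ ((i : ℕ) + 1) * x j ^ d j,
      ← Fintype.sum_subtype_add_sum_subtype (fun j => j ∈ S)]
    congr!
  let restrict (x : {x : Fin m → Fq // ∀ i : Fin s,
      ∑ j, (γ j) ^ ((i : ℕ) + 1) * x j ^ d j = 0}) (j : {j // j ∉ S}) : Fq := x.1 j
  have hrestrict : Function.Bijective restrict := by
    constructor
    · rintro ⟨x, hx⟩ ⟨y, hy⟩ hxy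
      have hoff (j : {j // j ∉ S}) : x j = y j := congrFun hxy j
      have hon : (fun k => x (e k)) = fun k => y (e k) := by
        refine hbij.injective (funext fun i => ?_)
        have h := (hx i).trans (hy i).symm
        simp only [hsplit, hoff] at h
        exact add_right_cancel h
      refine Subtype.ext (funext fun j => ?_)
      by_cases hj : j ∈ S
      · simpa using congrFun hon (e.symm ⟨j, hj⟩)
      · exact hoff ⟨j, hj⟩
    · intro y
      obtain ⟨v, hv⟩ := hbij.surjective fun i : Fin s =>
        -∑ j : {j // j ∉ S}, γ j ^ ((i : ℕ) + 1) * y j ^ d j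
      let x (j : Fin m) : Fq := if hj : j ∈ S then v (e.symm ⟨j, hj⟩) else y ⟨j, hj⟩
      have hon (k : Fin s) : x (e k) = v k := by simp [x]
      have hoff (j : {j // j ∉ S}) : x j = y j := by simp [x, j.2]
      refine ⟨⟨x, fun i => ?_⟩, funext hoff⟩
      simp only [hsplit, hon, hoff]
      exact add_eq_zero_iff_eq_neg.mpr (congrFun hv i)
  rw [Nat.card_eq_of_bijective restrict hrestrict, Nat.card_fun, Nat.card_eq_fintype_card,
    Nat.card_eq_fintype_card, Fintype.card_subtype_compl, Fintype.card_fin,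
    Fintype.card_coe, hS]
end

section
/- Let h be a prime power, let t, m be positive integers with q := h^t > h^{m−1}, let 1 ≤ s ≤ m, let γ_1,…,γ_m be distinct elements of F_q^*, and set d_j = h^{m−j} for j = 1,…,m. For i = 1,…,s define f_i(x_1,…,x_m) = Σ_{j=1}^m γ_j^i · x_j^{d_j}, and let V₀ = {x ∈ F_q^m : f_1(x) = ⋯ = f_s(x) = 0}. Then: (i) V₀ is an F_h-linear subspace of F_q^m (viewing F_q^m as an F_h-vector space) of cardinality exactly q^{m−s}; and (ii) for every multiple n of m, the product set S = V₀^{n/m} ⊆ F_q^n is an F_h-linear subspace of cardinality q^{(m−s)n/m} which is (k, h^{(m−1)k})-subspace-evasive for every integer 1 ≤ k ≤ s. -/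
open Finset Module

section LinearAlgebra

variable {K M ι : Type*} [Field K] [AddCommGroup M] [Module K M]

/-- The vectors of a finite ordered family that are not in the span of their predecessors are
linearly independent, so there are at most `finrank K M` of them. -/
theorem card_filter_notMem_span_Iio_le_finrank [FiniteDimensional K M] [Fintype ι] [LinearOrder ι]
    (v : ι → M) [DecidablePred fun p => v p ∉ Submodule.span K (v '' Set.Iio p)] :
    #{p | v p ∉ Submodule.span K (v '' Set.Iio p)} ≤ finrank K M := by
  have indep : ∀ P : Finset ι, (∀ p ∈ P, v p ∉ Submodule.span K (v '' Set.Iio p)) →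
      LinearIndepOn K v (P : Set ι) := by
    intro P
    induction P using Finset.induction_on_max with
    | empty => simp
    | insert a P hlt ih =>
      intro h
      rw [Finset.coe_insert]
      refine (ih fun p hp => h p (mem_insert_of_mem hp)).insert fun ha => ?_
      exact h a (mem_insert_self a P)
        (Submodule.span_mono (Set.image_mono fun p hp => hlt p (by simpa using hp)) ha)
  have := (indep {p | v p ∉ Submodule.span K (v '' Set.Iio p)} (by simp)).fintype_card_le_finrank
  simpa using this

/-- Vandermonde elimination modulo a submodule. -/
theorem Submodule.mem_of_sum_pow_smul_mem (G : Submodule K M) (P : Finset ι) (c : ι → K)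
    (w : ι → M) (hinj : Function.Injective c) (hc : ∀ j, c j ≠ 0) {s : ℕ} (hP : #P ≤ s)
    (H : ∀ i < s, ∑ j ∈ P, c j ^ (i + 1) • w j ∈ G) {j : ι} (hj : j ∈ P) : w j ∈ G := by
  classical
  let R : Polynomial K := ∏ l ∈ P.erase j, (Polynomial.X - Polynomial.C (c l))
  have hdeg : R.natDegree < s := by
    rw [Polynomial.natDegree_prod_of_monic _ _ fun l _ => Polynomial.monic_X_sub_C _]
    have := card_pos.2 ⟨j, hj⟩
    simp [card_erase_of_mem hj]
    omega
  have hroot : ∀ l ∈ P, l ≠ j → R.eval (c l) = 0 := fun l hl hlj => by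
    rw [Polynomial.eval_prod]
    exact prod_eq_zero (mem_erase.2 ⟨hlj, hl⟩) (by simp)
  have hne : R.eval (c j) ≠ 0 := by
    rw [Polynomial.eval_prod, prod_ne_zero_iff]
    intro l hl
    simpa [sub_eq_zero] using fun h => (mem_erase.1 hl).1 (hinj h).symm
  have hsum : ∑ l ∈ P, (c l * R.eval (c l)) • w l ∈ G := by
    have : ∑ l ∈ P, (c l * R.eval (c l)) • w l =
        ∑ i ∈ range s, R.coeff i • ∑ l ∈ P, c l ^ (i + 1) • w l := by
      simp_rw [smul_sum, Polynomial.eval_eq_sum_range' hdeg, mul_sum, sum_smul]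
      rw [sum_comm]
      refine sum_congr rfl fun i _ => sum_congr rfl fun l _ => ?_
      rw [smul_smul]
      congr 1
      ring
    rw [this]
    exact G.sum_mem fun i hi => G.smul_mem _ (H i (mem_range.1 hi))
  rw [sum_eq_single_of_mem j hj fun l hl hlj => by simp [hroot l hl hlj]] at hsum
  exact (G.smul_mem_iff (mul_ne_zero (hc j) hne)).1 hsum

/-- The `s × m` matrix `(γ_j ^ (i + 1))` has a kernel of dimension `m - s`. -/
theorem finrank_ker_mulVecLin_pow {m s : ℕ} (hsm : s ≤ m) (γ : Fin m → K)
    (hinj : Function.Injective γ) (hγ : ∀ j, γ j ≠ 0) :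
    finrank K (LinearMap.ker
      (Matrix.of fun (i : Fin s) (j : Fin m) => γ j ^ ((i : ℕ) + 1)).mulVecLin) = m - s := by
  set A := Matrix.of fun (i : Fin s) (j : Fin m) => γ j ^ ((i : ℕ) + 1)
  have hrow : LinearIndependent K A.row := by
    rw [Fintype.linearIndependent_iff]
    intro g hg
    let v : Fin s → K := fun i => γ (Fin.castLE hsm i)
    have hv : Function.Injective v := hinj.comp (Fin.castLE_injective hsm)
    have hz := Matrix.eq_zero_of_forall_index_sum_mul_pow_eq_zero (f := v) (v := g) hv fun l => by
      have h := congrFun hg (Fin.castLE hsm l)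
      simp only [Finset.sum_apply, Pi.smul_apply, Matrix.row, A, Matrix.of_apply, smul_eq_mul,
        Pi.zero_apply] at h
      refine (mul_eq_zero.1 (?_ : v l * ∑ i, g i * v l ^ (i : ℕ) = 0)).resolve_left (hγ _)
      rw [← h, mul_sum]
      refine sum_congr rfl fun i _ => ?_
      simp only [v]
      ring
    exact congrFun hz
  have hrank := hrow.rank_matrix
  have := A.mulVecLin.finrank_range_add_finrank_ker
  rw [Matrix.rank] at hrank
  simp at hrank this
  omega

end LinearAlgebra

section FiniteField

variable {k K : Type*} [Field k] [Fintype k] [Field K] [Fintype K] [Algebra k K]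

/-- The `i`-th power of the Frobenius of `K / k`. -/
noncomputable abbrev frobeniusPow (k K : Type*) [Field k] [Fintype k] [Field K] [Fintype K]
    [Algebra k K] (i : ℕ) : K ≃ₐ[k] K :=
  FiniteField.frobeniusAlgEquivOfAlgebraic k K ^ i

theorem frobeniusPow_apply (i : ℕ) (x : K) :
    frobeniusPow k K i x = x ^ Fintype.card k ^ i := by
  rw [frobeniusPow, AlgEquiv.coe_pow, FiniteField.coe_frobeniusAlgEquivOfAlgebraic_iterate]

/-- If the `k`-linear functions `X p : E → K` separate points, then the `k`-dimension of `E` is at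
most the `K`-dimension of any space of functions containing all Frobenius twists of the `X p`. -/
theorem finrank_le_finrank_of_pow_mem {E ι : Type*} [AddCommGroup E] [Module k E] [Finite E]
    (X : ι → E →ₗ[k] K) (hX : ∀ z, (∀ p, X p z = 0) → z = 0) (G : Submodule K (E → K))
    (hG : ∀ i p, (fun z => X p z ^ Fintype.card k ^ i) ∈ G) :
    finrank k E ≤ finrank K G := by
  let b := finBasis k E
  let ev : Fin (finrank k E) → Dual K G := fun l => (LinearMap.proj (b l)).comp G.subtype
  suffices h : LinearIndependent K ev by
    simpa [Subspace.dual_finrank_eq] using h.fintype_card_le_finrank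
  rw [Fintype.linearIndependent_iff]
  intro c hc
  have hpow : ∀ i p, ∑ l, c l * X p (b l) ^ Fintype.card k ^ i = 0 := fun i p => by
    simpa [ev] using LinearMap.congr_fun hc ⟨_, hG i p⟩
  set n := finrank k K
  have hn : ∀ x : K, x ^ Fintype.card k ^ n = x := fun x => by
    rw [← Module.card_eq_pow_finrank (K := k), FiniteField.pow_card]
  have htwist : ∀ i < n, ∀ p, ∑ l, c l ^ Fintype.card k ^ i * X p (b l) = 0 := by
    intro i hi p
    have h := congrArg (frobeniusPow k K i) (hpow (n - i) p)
    simp only [map_sum, map_mul, map_zero, frobeniusPow_apply] at h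
    simpa only [← pow_mul, ← pow_add, Nat.sub_add_cancel hi.le, hn] using h
  have htrace : ∀ a l, Algebra.trace k K (c l * a) = 0 := by
    intro a
    refine Fintype.linearIndependent_iff.1 b.linearIndependent _ (hX _ fun p => ?_)
    simp only [map_sum, map_smul, Algebra.smul_def, FiniteField.algebraMap_trace_eq_sum_pow,
      Nat.card_eq_fintype_card, sum_mul]
    rw [sum_comm]
    refine sum_eq_zero fun i hi => ?_
    have := congrArg (a ^ Fintype.card k ^ i * ·) (htwist i (mem_range.1 hi) p)
    simp only [mul_sum, mul_zero] at this
    rw [← this]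
    exact sum_congr rfl fun l _ => by ring
  exact fun l => (traceForm_nondegenerate k K).1 (c l) fun a => htrace a l

/-- If the coordinates `Y b j` on `U` satisfy the first `s ≥ dim U` twisted relations along
`f : E → U`, then all Frobenius twists of the functions `Y b j ∘ f` lie in a space of dimension at
most `(m - 1) * dim U`. -/
theorem exists_submodule_pow_mem {U E : Type*} [AddCommGroup U] [Module K U] [FiniteDimensional K U]
    {m r s : ℕ} (Y : Fin r → Fin m → Dual K U) (f : E → U) (γ : Fin m → K)
    (hinj : Function.Injective γ) (hγ : ∀ j, γ j ≠ 0) (hs : finrank K U ≤ s)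
    (hrel : ∀ z b, ∀ i < s,
      ∑ j, γ j ^ (i + 1) * Y b j (f z) ^ Fintype.card k ^ (m - 1 - (j : ℕ)) = 0) :
    ∃ G : Submodule K (E → K), finrank K G ≤ (m - 1) * finrank K U ∧
      ∀ i b j, (fun z => Y b j (f z) ^ Fintype.card k ^ i) ∈ G := by
  classical
  let v : Fin r ×ₗ Fin m → Dual K U := fun p => Y (ofLex p).1 (ofLex p).2
  let P : Finset (Fin r ×ₗ Fin m) := {p | v p ∉ Submodule.span K (v '' Set.Iio p)}
  have hP : #P ≤ finrank K U := by
    simpa [Subspace.dual_finrank_eq] using card_filter_notMem_span_Iio_le_finrank (K := K) v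
  let gen : P × Fin (m - 1) → E → K := fun x z => v x.1 (f z) ^ Fintype.card k ^ (x.2 : ℕ)
  let G : Submodule K (E → K) := Submodule.span K (Set.range gen)
  refine ⟨G, (finrank_range_le_card gen).trans ?_, ?_⟩
  · simpa [mul_comm] using Nat.mul_le_mul_left (m - 1) hP
  have hspan : ∀ (T : Set (Dual K U)) (i : ℕ),
      (∀ y ∈ T, (fun z => y (f z) ^ Fintype.card k ^ i) ∈ G) →
      ∀ y ∈ Submodule.span K T, (fun z => y (f z) ^ Fintype.card k ^ i) ∈ G := by
    intro T i hT y hy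
    simp only [← frobeniusPow_apply (k := k)] at hT ⊢
    induction hy using Submodule.span_induction with
    | mem y hy => exact hT y hy
    | zero =>
      simp only [LinearMap.zero_apply, map_zero]
      exact G.zero_mem
    | add y y' _ _ ih ih' =>
      simp only [LinearMap.add_apply, map_add]
      exact G.add_mem ih ih'
    | smul c y _ ih =>
      simp only [LinearMap.smul_apply, smul_eq_mul, map_mul]
      exact G.smul_mem (frobeniusPow k K i c) ih
  suffices h : ∀ (b : Fin r) (N i : ℕ) (j : Fin m), i + j = N →
      (fun z => Y b j (f z) ^ Fintype.card k ^ i) ∈ G from fun i b j => h b _ i j rfl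
  intro b
  induction b using WellFoundedLT.induction with | ind b ihb =>
  intro N
  induction N using Nat.strong_induction_on with | h N ihN =>
  have hnonpivot : ∀ (i : ℕ) (j : Fin m), i + j = N → toLex (b, j) ∉ P →
      (fun z => Y b j (f z) ^ Fintype.card k ^ i) ∈ G := by
    intro i j hij hj
    refine hspan _ i ?_ (v (toLex (b, j))) (by simpa [P] using hj)
    rintro _ ⟨p, hp, rfl⟩
    rcases Prod.Lex.lt_iff.1 (Set.mem_Iio.1 hp) with h | ⟨h, h'⟩
    · exact ihb _ h _ i _ rfl
    · have h' : (ofLex p).2 < j := h'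
      have h : (ofLex p).1 = b := h
      simp only [v, h]
      exact ihN (i + (ofLex p).2) (by have : ((ofLex p).2 : ℕ) < j := h'; omega) i _ rfl
  intro i j hij
  by_cases hj : toLex (b, j) ∈ P
  · by_cases hi : i < m - 1
    · exact Submodule.subset_span ⟨(⟨_, hj⟩, ⟨i, hi⟩), rfl⟩
    · let Q : Finset (Fin m) := {l | toLex (b, l) ∈ P}
      have hQ : #Q ≤ s := by
        refine (card_le_card_of_injOn (fun l => toLex (b, l)) (fun l hl => ?_) ?_).trans
          (hP.trans hs)
        · simpa [Q] using hl
        · intro l _ l' _ h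
          simpa using h
      let σ := frobeniusPow k K (N - (m - 1))
      let w : Fin m → E → K := fun l z => Y b l (f z) ^ Fintype.card k ^ (N - (l : ℕ))
      have hw : w j ∈ G := by
        refine G.mem_of_sum_pow_smul_mem Q (fun l => σ (γ l)) w (σ.injective.comp hinj)
          (fun l => by simpa using hγ l) hQ (fun e he => ?_) (by simpa [Q] using hj)
        have hzero : ∑ l, σ (γ l) ^ (e + 1) • w l = 0 := by
          funext z
          have h := congrArg σ (hrel z b e he)
          simp only [map_sum, map_mul, map_pow, map_zero] at h
          rw [Finset.sum_apply, Pi.zero_apply, ← h]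
          refine sum_congr rfl fun l _ => ?_
          simp only [Pi.smul_apply, smul_eq_mul, w]
          congr 1
          rw [frobeniusPow_apply, ← pow_mul, ← pow_add]
          congr 2
          omega
        rw [← sum_filter_add_sum_filter_not univ (fun l => toLex (b, l) ∈ P)] at hzero
        rw [eq_neg_of_add_eq_zero_left hzero]
        refine G.neg_mem (G.sum_mem fun l hl => G.smul_mem _ ?_)
        exact hnonpivot _ l (by omega) (mem_filter.1 hl).2
      have hi' : N - (j : ℕ) = i := by omega
      simpa only [w, hi'] using hw
  · exact hnonpivot i j hij hj

/-- The `k`-linear form `∑ j, γ_j ^ (i + 1) x_j ^ (h ^ (m - 1 - j))` on `K^m`. -/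
noncomputable def twistedForm (k : Type*) {K : Type*} [Field k] [Fintype k] [Field K] [Fintype K]
    [Algebra k K] {m : ℕ} (γ : Fin m → K) (i : ℕ) : (Fin m → K) →ₗ[k] K :=
  ∑ j, (LinearMap.mulLeft k (γ j ^ (i + 1))).comp
    ((frobeniusPow k K (m - 1 - j)).toLinearMap.comp (LinearMap.proj j))

theorem twistedForm_apply {m : ℕ} (γ : Fin m → K) (i : ℕ) (x : Fin m → K) :
    twistedForm k γ i x = ∑ j, γ j ^ (i + 1) * x j ^ Fintype.card k ^ (m - 1 - (j : ℕ)) := by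
  simp [twistedForm, ← frobeniusPow_apply]

/-- The common kernel of the first `s` twisted forms. -/
noncomputable def twistedKernel (k : Type*) {K : Type*} [Field k] [Fintype k] [Field K] [Fintype K]
    [Algebra k K] {m : ℕ} (γ : Fin m → K) (s : ℕ) : Submodule k (Fin m → K) :=
  ⨅ i : Fin s, LinearMap.ker (twistedForm k γ i)

theorem mem_twistedKernel {m : ℕ} {γ : Fin m → K} {s : ℕ} {x : Fin m → K} :
    x ∈ twistedKernel k γ s ↔ ∀ i : Fin s,
      ∑ j, γ j ^ ((i : ℕ) + 1) * x j ^ Fintype.card k ^ (m - 1 - (j : ℕ)) = 0 := by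
  simp [twistedKernel, twistedForm_apply]

theorem card_twistedKernel {m s : ℕ} (hsm : s ≤ m) (γ : Fin m → K)
    (hinj : Function.Injective γ) (hγ : ∀ j, γ j ≠ 0) :
    Nat.card (twistedKernel k γ s) = Fintype.card K ^ (m - s) := by
  rw [← finrank_ker_mulVecLin_pow hsm γ hinj hγ, ← Nat.card_eq_fintype_card,
    ← Module.natCard_eq_pow_finrank]
  refine Nat.card_congr (Equiv.subtypeEquiv
    (Equiv.piCongrRight fun j : Fin m => (frobeniusPow k K (m - 1 - j)).toEquiv) fun x => ?_)
  rw [mem_twistedKernel, LinearMap.mem_ker, funext_iff]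
  simp only [Matrix.mulVecLin_apply, Matrix.mulVec, dotProduct, Matrix.of_apply, Pi.zero_apply,
    Equiv.piCongrRight_apply, Pi.map_apply, AlgEquiv.toEquiv_eq_coe, AlgEquiv.coe_toEquiv,
    frobeniusPow_apply]

end FiniteField

/-- Let `h` be a prime power (the cardinality of the finite field `Fh`),
`q = h^t > h^(m-1)`, `1 ≤ s ≤ m`, `γ_1, …, γ_m` distinct elements of `F_q^*`, and
`d_j = h^(m-j)`. Let `V₀ ⊆ F_q^m` be the common zero set of
`f_i(x) = Σ_j γ_j^i x_j^{d_j}` (`i = 1, …, s`). Then (i) `V₀` is an `F_h`-linear subspace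
of `F_q^m` of cardinality exactly `q^(m-s)`, and (ii) for every multiple `n = m·r` of `m`,
the product set `S = V₀^r ⊆ F_q^n` is an `F_h`-linear subspace of cardinality
`q^((m-s)·r)` which is `(k, h^((m-1)k))`-subspace-evasive for every `1 ≤ k ≤ s`. -/
theorem stmt_9 (Fh Fq : Type) [Field Fh] [Fintype Fh] [Field Fq] [Fintype Fq]
    [Algebra Fh Fq] (t m : ℕ) (ht : 0 < t) (hm : 0 < m)
    (hq : Fintype.card Fq = Fintype.card Fh ^ t)
    (hbig : Fintype.card Fh ^ (m - 1) < Fintype.card Fq)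
    (s : ℕ) (hs : 1 ≤ s) (hsm : s ≤ m)
    (γ : Fin m → Fq) (hγinj : Function.Injective γ) (hγ0 : ∀ j, γ j ≠ 0) :
    (∃ V : Submodule Fh (Fin m → Fq),
      (V : Set (Fin m → Fq)) = {x : Fin m → Fq | ∀ i : Fin s,
        ∑ j, (γ j) ^ ((i : ℕ) + 1) * x j ^ (Fintype.card Fh ^ (m - 1 - (j : ℕ))) = 0} ∧
      Nat.card V = Fintype.card Fq ^ (m - s)) ∧
    (∀ r : ℕ, 0 < r →
      ∃ S : Submodule Fh (Fin r → Fin m → Fq),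
        (S : Set (Fin r → Fin m → Fq)) = {x | ∀ b : Fin r, ∀ i : Fin s,
          ∑ j, (γ j) ^ ((i : ℕ) + 1) * x b j ^ (Fintype.card Fh ^ (m - 1 - (j : ℕ))) = 0} ∧
        Nat.card S = Fintype.card Fq ^ ((m - s) * r) ∧
        (∀ k : ℕ, 1 ≤ k → k ≤ s →
          ∀ U : Submodule Fq (Fin r → Fin m → Fq), Module.finrank Fq U = k →
            Nat.card ↥((U : Set (Fin r → Fin m → Fq)) ∩ (S : Set (Fin r → Fin m → Fq)))
              ≤ Fintype.card Fh ^ ((m - 1) * k))) := by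
  refine ⟨⟨twistedKernel Fh γ s, Set.ext fun x => mem_twistedKernel,
    card_twistedKernel hsm γ hγinj hγ0⟩, fun r _ => ?_⟩
  refine ⟨Submodule.pi Set.univ fun _ => twistedKernel Fh γ s, ?_, ?_, ?_⟩
  · ext x
    simp [mem_twistedKernel]
  · have e : (Submodule.pi Set.univ fun _ : Fin r => twistedKernel Fh γ s) ≃
        (Fin r → twistedKernel Fh γ s) :=
      { toFun x b := ⟨x.1 b, x.2 b trivial⟩
        invFun x := ⟨fun b => x b, fun b _ => (x b).2⟩ }
    rw [Nat.card_congr e, Nat.card_fun, card_twistedKernel hsm γ hγinj hγ0, pow_mul]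
    simp
  · intro k _ hks U hU
    let Z : Submodule Fh (Fin r → Fin m → Fq) :=
      U.restrictScalars Fh ⊓ Submodule.pi Set.univ fun _ => twistedKernel Fh γ s
    obtain ⟨G, hGle, hG⟩ := exists_submodule_pow_mem (k := Fh) (E := Z)
      (fun b j => ((LinearMap.proj j).comp (LinearMap.proj b)).comp U.subtype)
      (fun z => ⟨z.1, z.2.1⟩) γ hγinj hγ0 (hU.trans_le hks)
      fun z b i hi => mem_twistedKernel.1 (z.2.2 b trivial) ⟨i, hi⟩
    have hle := finrank_le_finrank_of_pow_mem
      (fun p : Fin r × Fin m => ((LinearMap.proj p.2).comp (LinearMap.proj p.1)).comp Z.subtype)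
      (fun z hz => Subtype.ext (funext fun b => funext fun j => hz (b, j))) G
      fun i p => hG i p.1 p.2
    change Nat.card Z ≤ _
    rw [Module.natCard_eq_pow_finrank (K := Fh), Nat.card_eq_fintype_card]
    exact Nat.pow_le_pow_right Fintype.card_pos (hle.trans (hU ▸ hGle))
end

section
/- Let q be a prime power, γ a generator of the multiplicative group F_q^*, ℓ a divisor of q−1, and N = (q−1)/ℓ. Let s ≥ 1 and 1 ≤ k ≤ ℓN be integers, and set D = ⌊(ℓN − k + 1)/(s+1)⌋. Then for any elements y_{i,j} ∈ F_q (0 ≤ i < ℓ, 0 ≤ j < N), there exist polynomials A_0, A_1, …, A_s ∈ F_q[X], not all zero, with deg A_0 ≤ D + k − 1 and deg A_r ≤ D for 1 ≤ r ≤ s, such that for all 0 ≤ i < ℓ and 0 ≤ j < N: A_0(γ^{iN+j}) + Σ_{r=1}^s A_r(γ^{iN+j}) · y_{(i+r−1 mod ℓ), j} = 0. -/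
open Polynomial

/-- A homogeneous interpolation problem for polynomials `P` of degree `< a` and `Q r` of degree
`< b` has a nontrivial solution as soon as there are more coefficients than conditions. -/
theorem exists_ne_zero_interpolation {F ι κ : Type*} [Field F] [Fintype ι] [Fintype κ]
    (x : ι → F) (w : κ → ι → F) (a b : ℕ)
    (hcard : Fintype.card ι < a + Fintype.card κ * b) :
    ∃ (P : F[X]) (Q : κ → F[X]), (P ≠ 0 ∨ ∃ r, Q r ≠ 0) ∧ P.degree < a ∧
      (∀ r, (Q r).degree < b) ∧ ∀ i, P.eval (x i) + ∑ r, (Q r).eval (x i) * w r i = 0 := by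
  let f : (degreeLT F a × (κ → degreeLT F b)) →ₗ[F] (ι → F) :=
    { toFun := fun p i => (p.1 : F[X]).eval (x i) + ∑ r, (p.2 r : F[X]).eval (x i) * w r i
      map_add' := fun p p' => by
        ext i
        simp [add_mul, Finset.sum_add_distrib]
        ring
      map_smul' := fun c p => by
        ext i
        simp [mul_add, Finset.mul_sum, mul_assoc] }
  have : ∀ n, Module.Finite F (degreeLT F n) := fun n =>
    Module.Finite.equiv (degreeLTEquiv F n).symm
  have hrank : ∀ n, Module.finrank F (degreeLT F n) = n := fun n => by
    simp [(degreeLTEquiv F n).finrank_eq]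
  have hker : LinearMap.ker f ≠ ⊥ := LinearMap.ker_ne_bot_of_finrank_lt (by
    simpa [Module.finrank_prod, Module.finrank_pi_fintype, hrank] using hcard)
  obtain ⟨⟨P, Q⟩, hmem, hne⟩ := Submodule.exists_mem_ne_zero_of_ne_bot hker
  refine ⟨P, fun r => Q r, ?_, mem_degreeLT.1 P.2, fun r => mem_degreeLT.1 (Q r).2,
    fun i => congrFun (LinearMap.mem_ker.1 hmem) i⟩
  by_contra! h
  exact hne (Prod.ext (Subtype.ext h.1) (funext fun r => Subtype.ext (h.2 r)))

/-- Let `q` be a prime power, `γ` a generator of `F_q^*`, `ℓ ∣ q - 1`,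
`N = (q-1)/ℓ`, `s ≥ 1`, `1 ≤ k ≤ ℓN`, and `D = ⌊(ℓN - k + 1)/(s+1)⌋`. Then for any received
word `(y_{i,j})_{i ∈ ℤ/ℓ, 0 ≤ j < N}` over `F_q`, there exist polynomials `A_0, …, A_s`,
not all zero, with `deg A_0 ≤ D + k - 1` and `deg A_r ≤ D` for `r ≥ 1`, satisfying the
interpolation conditions
`A_0(γ^(iN+j)) + Σ_{r=1}^s A_r(γ^(iN+j)) · y_{(i+r-1 mod ℓ), j} = 0` for all `i, j`. -/
theorem stmt_11 (Fq : Type) [Field Fq] [Fintype Fq] (γ : Fq)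
    (hγ : orderOf γ = Fintype.card Fq - 1) (ℓ N : ℕ) (hℓ : 0 < ℓ)
    (hN : ℓ * N = Fintype.card Fq - 1) (s k : ℕ) (hs : 1 ≤ s) (hk1 : 1 ≤ k)
    (hk2 : k ≤ ℓ * N) (D : ℕ) (hD : D = (ℓ * N - k + 1) / (s + 1))
    (y : ZMod ℓ → Fin N → Fq) :
    ∃ A : Fin (s + 1) → Polynomial Fq,
      (∃ r, A r ≠ 0) ∧
      (A 0).natDegree ≤ D + k - 1 ∧
      (∀ r : Fin s, (A r.succ).natDegree ≤ D) ∧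
      ∀ (i : ZMod ℓ) (j : Fin N),
        (A 0).eval (γ ^ (i.val * N + (j : ℕ))) +
          ∑ r : Fin s, (A r.succ).eval (γ ^ (i.val * N + (j : ℕ))) * y (i + (r : ℕ)) j = 0 := by
  have : NeZero ℓ := ⟨hℓ.ne'⟩
  have hcount : ℓ * N < (D + k) + s * (D + 1) := by
    have h : _ < (s + 1) * _ := Nat.lt_mul_div_succ (ℓ * N - k + 1) (Nat.add_one_pos s)
    rw [← hD] at h
    have h' : (s + 1) * (D + 1) = D + 1 + s * (D + 1) := by ring
    omega
  obtain ⟨P, Q, hne, hP, hQ, heval⟩ := exists_ne_zero_interpolation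
    (fun p : ZMod ℓ × Fin N => γ ^ (p.1.val * N + (p.2 : ℕ)))
    (fun (r : Fin s) p => y (p.1 + (r : ℕ)) p.2) (D + k) (D + 1)
    (by simpa [ZMod.card] using hcount)
  refine ⟨Fin.cons P Q, ?_, ?_, fun r => ?_, fun i j => by simpa using heval (i, j)⟩
  · rcases hne with h | ⟨r, h⟩
    · exact ⟨0, by simpa using h⟩
    · exact ⟨r.succ, by simpa using h⟩
  · rw [Fin.cons_zero, natDegree_le_iff_coeff_eq_zero]
    exact fun n hn => (degree_lt_iff_coeff_zero P _).1 hP n (by omega)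
  · rw [Fin.cons_succ, natDegree_le_iff_coeff_eq_zero]
    exact fun n hn => (degree_lt_iff_coeff_zero (Q r) _).1 (hQ r) n hn
end

section
/- Let q be a prime power, γ a generator of F_q^*, ℓ a divisor of q−1, N = (q−1)/ℓ, and ζ = γ^N (an element of order ℓ). Let s ≥ 1, 1 ≤ k ≤ ℓN, let D ≥ 0 be an integer, let y_{i,j} ∈ F_q (0 ≤ i < ℓ, 0 ≤ j < N), and let A_0, A_1, …, A_s ∈ F_q[X] satisfy deg A_0 ≤ D + k − 1, deg A_r ≤ D for 1 ≤ r ≤ s, and A_0(γ^{iN+j}) + Σ_{r=1}^s A_r(γ^{iN+j}) · y_{(i+r−1 mod ℓ), j} = 0 for all 0 ≤ i < ℓ, 0 ≤ j < N. Let f ∈ F_q[X] with deg f ≤ k−1, and let T = {j ∈ {0,…,N−1} : y_{i,j} = f(ζ^i γ^j) for all 0 ≤ i < ℓ}. If ℓ·|T| > D + k − 1, then A_0(X) + Σ_{r=1}^s A_r(X) · f(ζ^{r−1} X) = 0 as a polynomial identity in F_q[X]. -/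
open Polynomial

/-- Powers of an `n`-th root of unity with exponents in `ZMod n` add up. -/
theorem pow_val_add_natCast {M : Type*} [Monoid M] {n : ℕ} [NeZero n] {a : M}
    (ha : a ^ n = 1) (i : ZMod n) (r : ℕ) :
    a ^ (i + (r : ZMod n)).val = a ^ (i.val + r) := by
  rw [ZMod.val_add, ZMod.val_natCast, Nat.add_mod_mod, ← pow_eq_pow_mod _ ha]

/-- If `g` has order `n * N`, the powers `g ^ (i * N + j)` with `i < n`, `j < N` are distinct. -/
theorem injective_pow_val_mul_add {M : Type*} [Monoid M] {n N : ℕ} [NeZero n]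
    {g : M} (hg : orderOf g = n * N) :
    Function.Injective fun p : ZMod n × Fin N => g ^ (p.1.val * N + (p.2 : ℕ)) := by
  rintro ⟨i, j⟩ ⟨i', j'⟩ h
  have exponent_lt (i : ZMod n) (j : Fin N) : i.val * N + (j : ℕ) < orderOf g := by
    have hmul := Nat.mul_le_mul_right N (ZMod.val_lt i)
    rw [Nat.succ_mul] at hmul
    have := j.isLt
    omega
  have hexp : i.val * N + (j : ℕ) = i'.val * N + (j' : ℕ) :=
    pow_injOn_Iio_orderOf (exponent_lt i j) (exponent_lt i' j') h
  have hj : (j : ℕ) = j' := by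
    simpa [Nat.mul_add_mod', Nat.mod_eq_of_lt] using congrArg (· % N) hexp
  have hi : i.val = i'.val :=
    Nat.eq_of_mul_eq_mul_right j.pos (by omega)
  exact Prod.ext (ZMod.val_injective n hi) (Fin.ext hj)

/-- With the setup of the interpolation step for low-order folded
Reed–Solomon codes (`γ` generating `F_q^*`, `ℓ ∣ q - 1`, `N = (q-1)/ℓ`, `ζ = γ^N`):
if `A_0, …, A_s` satisfy the degree bounds and the interpolation conditions for a received
word `y`, and `f` (of degree `≤ k - 1`) agrees with `y` on a set `T` of columns with
`ℓ·|T| > D + k - 1`, then `A_0(X) + Σ_{r=1}^s A_r(X)·f(ζ^(r-1)X) = 0` identically. -/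
theorem stmt_12 (Fq : Type) [Field Fq] [Fintype Fq] (γ : Fq)
    (hγ : orderOf γ = Fintype.card Fq - 1) (ℓ N : ℕ) (hℓ : 0 < ℓ)
    (hN : ℓ * N = Fintype.card Fq - 1) (ζ : Fq) (hζ : ζ = γ ^ N)
    (s k : ℕ) (hs : 1 ≤ s) (hk1 : 1 ≤ k) (hk2 : k ≤ ℓ * N) (D : ℕ)
    (y : ZMod ℓ → Fin N → Fq) (A : Fin (s + 1) → Polynomial Fq)
    (hA0 : (A 0).natDegree ≤ D + k - 1)
    (hAr : ∀ r : Fin s, (A r.succ).natDegree ≤ D)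
    (hinterp : ∀ (i : ZMod ℓ) (j : Fin N),
      (A 0).eval (γ ^ (i.val * N + (j : ℕ))) +
        ∑ r : Fin s, (A r.succ).eval (γ ^ (i.val * N + (j : ℕ))) * y (i + (r : ℕ)) j = 0)
    (f : Polynomial Fq) (hf : f.natDegree ≤ k - 1)
    (hagree : D + k - 1 <
      ℓ * Nat.card {j : Fin N // ∀ i : ZMod ℓ, y i j = f.eval (ζ ^ i.val * γ ^ (j : ℕ))}) :
    A 0 + ∑ r : Fin s, A r.succ * f.comp (C (ζ ^ (r : ℕ)) * X) = 0 := by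
  classical
  have : NeZero ℓ := ⟨hℓ.ne'⟩
  have hζ1 : ζ ^ ℓ = 1 := by
    rw [hζ, ← pow_mul, mul_comm, hN, ← hγ, pow_orderOf_eq_one]
  let T := {j : Fin N // ∀ i : ZMod ℓ, y i j = f.eval (ζ ^ i.val * γ ^ (j : ℕ))}
  let point : ZMod ℓ × T → Fq := fun p => γ ^ (p.1.val * N + (p.2.1 : ℕ))
  have hpoint : Function.Injective point :=
    (injective_pow_val_mul_add (hγ.trans hN.symm)).comp
      (Function.injective_id.prodMap Subtype.val_injective)
  refine eq_zero_of_natDegree_lt_card_of_eval_eq_zero _ hpoint ?_ ?_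
  · rintro ⟨i, j, hj⟩
    rw [← hinterp i j, eval_add, eval_finsetSum]
    congr 1
    refine Finset.sum_congr rfl fun r _ => ?_
    rw [hj, pow_val_add_natCast hζ1, eval_mul, eval_comp, eval_mul, eval_C, eval_X]
    congr 2
    simp only [point, hζ]
    ring
  · rw [Fintype.card_prod, ZMod.card, ← Nat.card_eq_fintype_card (α := T)]
    refine lt_of_le_of_lt (natDegree_add_le_of_degree_le hA0 ?_) hagree
    refine natDegree_sum_le_of_forall_le _ _ fun r _ => ?_
    have hcomp : (f.comp (C (ζ ^ (r : ℕ)) * X)).natDegree ≤ k - 1 :=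
      natDegree_comp_le.trans <|
        (Nat.mul_le_mul hf ((natDegree_C_mul_le _ _).trans natDegree_X_le)).trans_eq (mul_one _)
    exact (natDegree_mul_le_of_le (hAr r) hcomp).trans (by omega)
end

section
/- Let q be a prime power, let ζ ∈ F_q^* have multiplicative order ℓ, let a, k, s be positive integers, and let R ∈ F_q[X] be a monic irreducible polynomial with deg R ≥ k that divides X^{q^a} − ζX. Let A_0, A_1, …, A_s ∈ F_q[X] be polynomials, not all zero. Then the set {f ∈ F_q[X] : deg f ≤ k−1 and A_0(X) + Σ_{r=1}^s A_r(X)·f(ζ^{r−1}X) = 0} has cardinality at most q^{a(s−1)}. -/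
open Polynomial

/-- A finite family of polynomials that is not identically zero can be divided by a common nonzero
factor so that a given irreducible polynomial does not divide every member. -/
lemma exists_eq_mul_and_exists_not_dvd {F ι : Type*} [Field F] [Fintype ι] {R : F[X]}
    (hR : Irreducible R) (A : ι → F[X]) (hA : ∃ i, A i ≠ 0) :
    ∃ (D : F[X]) (B : ι → F[X]), D ≠ 0 ∧ (∀ i, A i = D * B i) ∧ ∃ i, ¬ R ∣ B i := by
  classical
  let _ : NormalizedGCDMonoid F[X] :=
    Classical.choice (inferInstanceAs (Nonempty (NormalizedGCDMonoid F[X])))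
  obtain ⟨i₀, hi₀⟩ := hA
  obtain ⟨B, hB, hgcd⟩ := Finset.extract_gcd A (s := Finset.univ) ⟨i₀, Finset.mem_univ _⟩
  refine ⟨Finset.univ.gcd A, B, fun h => hi₀ ?_, fun i => hB i (Finset.mem_univ _), ?_⟩
  · exact Finset.gcd_eq_zero_iff.1 h i₀ (Finset.mem_univ _)
  · by_contra! h
    exact hR.not_isUnit (isUnit_of_dvd_one (hgcd ▸ Finset.dvd_gcd fun i _ => h i))

/-- If `x ^ (q ^ a) = ζ x` with `ζ ∈ F_q`, then `f (ζ ^ r x) = f(x) ^ (q ^ (a r))`. -/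
lemma aeval_pow_mul_eq_aeval_pow {F K : Type*} [Field F] [Fintype F] [CommRing K] [Algebra F K]
    {ζ : F} {a : ℕ} {x : K} (hx : x ^ (Fintype.card F ^ a) = algebraMap F K ζ * x)
    (f : F[X]) (r : ℕ) :
    aeval (algebraMap F K (ζ ^ r) * x) f = aeval x f ^ (Fintype.card F ^ (a * r)) := by
  have hfrob : ∀ (n : ℕ) (g : F[X]) (y : K),
      aeval y g ^ (Fintype.card F ^ n) = aeval (y ^ (Fintype.card F ^ n)) g := by
    intro n g y
    induction n with
    | zero => simp
    | succ n ih =>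
      rw [pow_succ, pow_mul, ih, ← map_pow, ← FiniteField.expand_card, expand_aeval, ← pow_mul]
  have hpow : x ^ (Fintype.card F ^ (a * r)) = algebraMap F K (ζ ^ r) * x := by
    induction r with
    | zero => simp
    | succ r ih =>
      rw [Nat.mul_succ, pow_add, pow_mul, ih, mul_pow, hx, ← map_pow, FiniteField.pow_card_pow,
        ← mul_assoc, ← map_mul, pow_succ]
  rw [hfrob, hpow]

/-- The affine `Q`-polynomial `c₀ + ∑ r, c_{r+1} Y ^ (Q ^ r)`. -/
noncomputable def affinePolynomial {K : Type*} [CommRing K] {s : ℕ} (Q : ℕ)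
    (c : Fin (s + 1) → K) : K[X] :=
  C (c 0) + ∑ r : Fin s, C (c r.succ) * X ^ (Q ^ (r : ℕ))

lemma affinePolynomial_ne_zero {K : Type*} [CommRing K] {s Q : ℕ} (hQ : 1 < Q)
    {c : Fin (s + 1) → K} (hc : ∃ r, c r ≠ 0) : affinePolynomial Q c ≠ 0 := by
  intro h
  obtain ⟨r, hr⟩ := hc
  apply hr
  have hQ0 : Q ≠ 0 := by omega
  induction r using Fin.cases with
  | zero =>
    have h0 := congrArg (fun p => coeff p 0) h
    simpa [affinePolynomial, coeff_X_pow, (pow_ne_zero _ hQ0).symm] using h0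
  | succ r =>
    have hr := congrArg (fun p => coeff p (Q ^ (r : ℕ))) h
    simpa [affinePolynomial, coeff_X_pow, coeff_C, hQ0, Nat.pow_right_inj hQ, Fin.val_inj]
      using hr

lemma natDegree_affinePolynomial_le {K : Type*} [CommRing K] {s Q : ℕ} (hQ : 0 < Q)
    (c : Fin (s + 1) → K) : (affinePolynomial Q c).natDegree ≤ Q ^ (s - 1) := by
  refine natDegree_add_le_of_degree_le (by simp) (natDegree_sum_le_of_forall_le _ _ fun r _ => ?_)
  exact (natDegree_C_mul_X_pow_le _ _).trans (Nat.pow_le_pow_right hQ (by omega))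

/-- Let `q` be a prime power, `ζ ∈ F_q^*` of multiplicative order `ℓ`,
`a, k, s ≥ 1`, and let `R ∈ F_q[X]` be a monic irreducible polynomial of degree `≥ k`
dividing `X^(q^a) - ζX` (equivalently `ζX ≡ X^(q^a) (mod R)`). Let `A_0, …, A_s ∈ F_q[X]`,
not all zero. Then there are at most `q^(a(s-1))` polynomials `f ∈ F_q[X]` of degree `≤ k-1`
with `A_0(X) + Σ_{r=1}^s A_r(X)·f(ζ^(r-1)X) = 0`. -/
theorem stmt_13 (Fq : Type) [Field Fq] [Fintype Fq] (ζ : Fq) (ℓ : ℕ) (hℓ : 0 < ℓ)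
    (hζ : orderOf ζ = ℓ) (a k s : ℕ) (ha : 0 < a) (hk : 0 < k) (hs : 0 < s)
    (R : Polynomial Fq) (hmonic : R.Monic) (hirr : Irreducible R)
    (hdeg : k ≤ R.natDegree) (hR : R ∣ (X ^ (Fintype.card Fq ^ a) - C ζ * X))
    (A : Fin (s + 1) → Polynomial Fq) (hA : ∃ r, A r ≠ 0) :
    Nat.card {f : Polynomial Fq // f.natDegree ≤ k - 1 ∧
        A 0 + ∑ r : Fin s, A r.succ * f.comp (C (ζ ^ (r : ℕ)) * X) = 0}
      ≤ Fintype.card Fq ^ (a * (s - 1)) := by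
  classical
  have : Fact (Irreducible R) := ⟨hirr⟩
  set Q := Fintype.card Fq ^ a with hQdef
  have hQ : 1 < Q := Nat.one_lt_pow ha.ne' Fintype.one_lt_card
  obtain ⟨D, B, hD, hAB, r₀, hr₀⟩ := exists_eq_mul_and_exists_not_dvd hirr A hA
  set P : (AdjoinRoot R)[X] := affinePolynomial Q fun r => AdjoinRoot.mk R (B r) with hP
  have hP0 : P ≠ 0 := affinePolynomial_ne_zero hQ ⟨r₀, fun h => hr₀ (AdjoinRoot.mk_eq_zero.1 h)⟩
  have hroot : AdjoinRoot.root R ^ (Fintype.card Fq ^ a)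
      = algebraMap Fq (AdjoinRoot R) ζ * AdjoinRoot.root R := by
    have h := AdjoinRoot.mk_eq_zero.2 hR
    rwa [map_sub, map_pow, map_mul, AdjoinRoot.mk_X, AdjoinRoot.mk_C, sub_eq_zero] at h
  have hmem : ∀ f : Fq[X], A 0 + ∑ r : Fin s, A r.succ * f.comp (C (ζ ^ (r : ℕ)) * X) = 0 →
      AdjoinRoot.mk R f ∈ P.roots.toFinset := by
    intro f hf
    have hB : B 0 + ∑ r : Fin s, B r.succ * f.comp (C (ζ ^ (r : ℕ)) * X) = 0 := by
      refine (mul_eq_zero.1 ?_).resolve_left hD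
      rw [← hf, mul_add, Finset.mul_sum]
      simp only [hAB, mul_assoc]
    rw [Multiset.mem_toFinset, mem_roots hP0, IsRoot.def, ← map_zero (AdjoinRoot.mk R), ← hB]
    simp only [hP, affinePolynomial, eval_add, eval_C, eval_finsetSum, eval_mul, eval_pow, eval_X,
      map_add, map_sum, map_mul]
    congr 1
    refine Finset.sum_congr rfl fun r _ => ?_
    rw [hQdef, ← pow_mul, ← AdjoinRoot.aeval_eq f, ← aeval_pow_mul_eq_aeval_pow hroot,
      ← AdjoinRoot.aeval_eq (f.comp _), aeval_comp]
    simp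
  have hinj : ∀ f g : Fq[X], f.natDegree ≤ k - 1 → g.natDegree ≤ k - 1 →
      AdjoinRoot.mk R f = AdjoinRoot.mk R g → f = g := by
    intro f g hf hg hfg
    refine sub_eq_zero.1 (eq_zero_of_dvd_of_natDegree_lt (AdjoinRoot.mk_eq_mk.1 hfg) ?_)
    have := natDegree_sub_le_of_le hf hg
    omega
  calc _ ≤ Nat.card P.roots.toFinset :=
        Nat.card_le_card_of_injective (fun f => ⟨AdjoinRoot.mk R f.1, hmem f.1 f.2.2⟩)
          fun f g h => Subtype.ext (hinj _ _ f.2.1 g.2.1 (congrArg Subtype.val h))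
    _ ≤ P.natDegree := by
        rw [Nat.card_eq_fintype_card, Fintype.card_coe]
        exact (Multiset.toFinset_card_le _).trans (card_roots' P)
    _ ≤ Q ^ (s - 1) := natDegree_affinePolynomial_le (by omega) _
    _ = _ := by rw [hQdef, ← pow_mul]
end

section
/- There is an absolute constant C > 0 such that for every ε ∈ (0,1) there exist positive integers s ≤ C/ε and ℓ ≤ C/ε² with the following property. Let q be a prime power with ℓ dividing q−1, let γ generate F_q^*, let N = (q−1)/ℓ and ζ = γ^N, and let k and a be positive integers with a dividing k such that there exists a monic irreducible R ∈ F_q[X] with deg R ≥ k dividing X^{q^a} − ζX. Then there exists a set ℱ of polynomials in F_q[X] of degree at most k−1 with |ℱ| ≥ q^{(1−ε)k} such that for every array (y_{i,j}) ∈ F_q^{ℓ×N}, the number of f ∈ ℱ for which |{j ∈ {0,…,N−1} : f(ζ^i γ^j) = y_{i,j} for all 0 ≤ i < ℓ}| ≥ (k/(ℓN) + ε)·N is at most (C/ε)^{C/ε}. -/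
open Polynomial

/-- If the sets `H b` are few and small compared with `T`, then some `T`-colouring of `V` is such
that every colour class has fewer than `m` elements in each `H b`. -/
theorem exists_coloring_card_filter_lt {V B : Type*} [Fintype V] [DecidableEq V] [Fintype B]
    (H : B → Finset V) (h T m : ℕ) (hT : 0 < T) (hH : ∀ b, (H b).card ≤ h)
    (hlt : Fintype.card B * h ^ m * T < T ^ m) :
    ∃ c : V → Fin T, ∀ b t, ((H b).filter fun x => c x = t).card < m := by
  classical
  let mono (S : Finset V) (t : Fin T) : Finset (V → Fin T) :=
    Finset.univ.filter fun c => ∀ x ∈ S, c x = t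
  have hmono : ∀ S t, S.card = m → (mono S t).card * T ^ m = T ^ Fintype.card V := by
    intro S t hS
    have : mono S t = Fintype.piFinset fun x => if x ∈ S then {t} else Finset.univ := by
      ext c
      simp only [mono, Finset.mem_filter, Finset.mem_univ, true_and, Fintype.mem_piFinset]
      refine forall_congr' fun x => ?_
      by_cases hx : x ∈ S <;> simp [hx]
    rw [this, Fintype.card_piFinset]
    have h1 : ∀ x, (if x ∈ S then ({t} : Finset (Fin T)) else Finset.univ).card
        = if x ∈ S then 1 else T := by
      intro x; split_ifs <;> simp
    simp only [h1]
    rw [Finset.prod_ite]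
    simp only [Finset.prod_const_one, one_mul, Finset.prod_const]
    have h2 : (Finset.univ.filter fun x => x ∉ S).card = Fintype.card V - S.card := by
      rw [← Finset.card_compl]; congr 1; ext; simp
    have h3 : S.card ≤ Fintype.card V := Finset.card_le_univ S
    rw [h2, hS, ← pow_add]
    congr 1
    omega
  let bad : Finset (V → Fin T) :=
    Finset.univ.biUnion fun b => ((H b).powersetCard m).biUnion fun S =>
      Finset.univ.biUnion fun t => mono S t
  have hbad : bad.card * T ^ m ≤ Fintype.card B * h ^ m * T * T ^ Fintype.card V := by
    calc bad.card * T ^ m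
        ≤ (∑ b : B, ∑ S ∈ (H b).powersetCard m, ∑ t : Fin T, (mono S t).card) * T ^ m := by
          gcongr
          refine Finset.card_biUnion_le.trans (Finset.sum_le_sum fun b _ => ?_)
          refine Finset.card_biUnion_le.trans (Finset.sum_le_sum fun S _ => ?_)
          exact Finset.card_biUnion_le
      _ = ∑ b : B, ∑ S ∈ (H b).powersetCard m, T * T ^ Fintype.card V := by
          rw [Finset.sum_mul]
          refine Finset.sum_congr rfl fun b _ => ?_
          rw [Finset.sum_mul]
          refine Finset.sum_congr rfl fun S hS => ?_
          rw [Finset.sum_mul, Finset.sum_congr rfl fun t _ =>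
            hmono S t (Finset.mem_powersetCard.1 hS).2]
          simp
      _ ≤ ∑ b : B, h ^ m * (T * T ^ Fintype.card V) := by
          refine Finset.sum_le_sum fun b _ => ?_
          rw [Finset.sum_const, smul_eq_mul, Finset.card_powersetCard]
          gcongr
          exact (Nat.choose_le_pow _ _).trans (Nat.pow_le_pow_left (hH b) m)
      _ = _ := by
          rw [Finset.sum_const, smul_eq_mul, Finset.card_univ]; ring
  have hcard : bad.card < Fintype.card (V → Fin T) := by
    rw [Fintype.card_fun, Fintype.card_fin]
    have hTV : 0 < T ^ Fintype.card V := by positivity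
    refine lt_of_mul_lt_mul_right (hbad.trans_lt ?_) (Nat.zero_le (T ^ m))
    rw [mul_comm (T ^ Fintype.card V)]
    exact Nat.mul_lt_mul_of_pos_right hlt hTV
  obtain ⟨c, hc⟩ : ∃ c, c ∉ bad := by
    by_contra! hall
    exact absurd (Finset.card_le_card fun c _ => hall c : Finset.univ.card ≤ bad.card)
      (by simpa using hcard)
  refine ⟨c, fun b t => ?_⟩
  by_contra! hge
  obtain ⟨S, hS, hSm⟩ := Finset.exists_subset_card_eq hge
  refine hc ?_
  simp only [bad, mono, Finset.mem_biUnion, Finset.mem_univ, true_and, Finset.mem_filter,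
    Finset.mem_powersetCard]
  exact ⟨b, S, ⟨hS.trans (Finset.filter_subset _ _), hSm⟩, t,
    fun x hx => (Finset.mem_filter.1 (hS hx)).2⟩

/-- Some set containing at least a `1 / T` fraction of `V` meets each `H b` in fewer than `m`
elements. -/
theorem exists_large_finset_card_inter_lt {V B : Type*} [Fintype V] [DecidableEq V] [Fintype B]
    (H : B → Finset V) (h T m : ℕ) (hT : 0 < T) (hH : ∀ b, (H b).card ≤ h)
    (hlt : Fintype.card B * h ^ m * T < T ^ m) :
    ∃ F : Finset V, Fintype.card V ≤ T * F.card ∧ ∀ b, (F ∩ H b).card < m := by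
  classical
  obtain ⟨c, hc⟩ := exists_coloring_card_filter_lt H h T m hT hH hlt
  have : Nonempty (Fin T) := ⟨⟨0, hT⟩⟩
  obtain ⟨t, -, ht⟩ := Finset.exists_max_image Finset.univ
    (fun t => (Finset.univ.filter fun x => c x = t).card) Finset.univ_nonempty
  refine ⟨Finset.univ.filter fun x => c x = t, ?_, fun b => ?_⟩
  · rw [← Finset.card_univ, Finset.card_eq_sum_card_fiberwise (f := c) (t := Finset.univ)
      (fun x _ => by simp)]
    refine (Finset.sum_le_sum fun u hu => ht u hu).trans ?_
    simp
  · convert hc b t using 2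
    ext x
    simp [and_comm]

/-- Only few exponents `r < k` make `z ^ r` a root of a nonzero polynomial of degree less than `s`,
when `z` has finite order. -/
theorem card_filter_isRoot_pow_le {K : Type*} [Field K] [DecidableEq K] (P : K[X]) (hP : P ≠ 0)
    {s : ℕ} (hs : P.natDegree < s) (z : K) (hz : 0 < orderOf z) (k : ℕ) :
    (Finset.univ.filter fun r : Fin k => P.eval (z ^ (r : ℕ)) = 0).card
      ≤ s * (k / orderOf z + 1) := by
  have hroots : P.roots.toFinset.card ≤ s :=
    (Multiset.toFinset_card_le _).trans ((card_roots' P).trans hs.le)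
  calc _ ≤ (P.roots.toFinset ×ˢ Finset.range (k / orderOf z + 1)).card := by
        refine Finset.card_le_card_of_injOn (fun r => (z ^ (r : ℕ), (r : ℕ) / orderOf z)) ?_ ?_
        · intro r hr
          have hr' : P.eval (z ^ (r : ℕ)) = 0 := by simpa using hr
          simp only [Finset.coe_product, Set.mem_prod, Finset.mem_coe, Multiset.mem_toFinset,
            mem_roots hP, Finset.mem_range, IsRoot.def, hr', true_and]
          exact Nat.lt_succ_of_le (Nat.div_le_div_right r.2.le)
        · intro r _ r' _ h
          simp only [Prod.mk.injEq] at h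
          have hmod : (r : ℕ) % orderOf z = r' % orderOf z :=
            pow_injOn_Iio_orderOf (Nat.mod_lt _ hz) (Nat.mod_lt _ hz)
              (by simpa only [pow_mod_orderOf] using h.1)
          ext
          rw [← Nat.div_add_mod (r : ℕ) (orderOf z), h.2, hmod, Nat.div_add_mod]
    _ ≤ _ := by
        rw [Finset.card_product, Finset.card_range]
        gcongr

/-- If `∑ B i * f (z ^ i X)` vanishes modulo `X ^ k`, then the coefficients `f r` with `r < k` vanish
as soon as they do for those `r` where the leading equation `∑ B i 0 * z ^ (i r) = 0` holds. -/
theorem coeff_eq_zero_of_sum_mul_comp_coeff_eq_zero {K : Type*} [Field K] {s : ℕ}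
    (B : Fin s → K[X]) (z : K) (f : K[X]) (k : ℕ)
    (hsum : ∀ r < k, (∑ i, B i * f.comp (C (z ^ (i : ℕ)) * X)).coeff r = 0)
    (hbad : ∀ r < k, (∑ i : Fin s, C ((B i).coeff 0) * X ^ (i : ℕ)).eval (z ^ r) = 0 →
      f.coeff r = 0) :
    ∀ r < k, f.coeff r = 0 := by
  intro r
  induction r using Nat.strong_induction_on with
  | _ r ih =>
    intro hr
    by_cases h0 : (∑ i : Fin s, C ((B i).coeff 0) * X ^ (i : ℕ)).eval (z ^ r) = 0
    · exact hbad r hr h0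
    have h1 := hsum r hr
    rw [finsetSum_coeff] at h1
    have h2 : ∀ i : Fin s, (B i * f.comp (C (z ^ (i : ℕ)) * X)).coeff r
        = (B i).coeff 0 * (z ^ r) ^ (i : ℕ) * f.coeff r := by
      intro i
      rw [coeff_mul, Finset.sum_eq_single (0, r)]
      · rw [comp_C_mul_X_coeff, ← pow_mul, ← pow_mul, mul_comm r]
        ring
      · rintro ⟨u, v⟩ huv hne
        rw [Finset.HasAntidiagonal.mem_antidiagonal] at huv
        have hv : v < r := by
          rcases Nat.eq_zero_or_pos u with rfl | hu
          · exact absurd (by simpa using huv) (fun h : v = r => hne (by rw [h]))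
          · simp only at huv; omega
        rw [comp_C_mul_X_coeff, ih v hv (hv.trans hr)]
        simp
      · simp
    rw [Finset.sum_congr rfl fun i _ => h2 i, ← Finset.sum_mul] at h1
    refine (mul_eq_zero.1 h1).resolve_left fun h => h0 ?_
    simpa [eval_finsetSum] using h

section TruncatedKernel

variable {K : Type*} [Field K] [Fintype K] [DecidableEq K] {s k : ℕ}

/-- The coefficient vectors `v` of polynomials `f` of degree less than `k` with
`∑ B i * f (z ^ i X) = 0` modulo `X ^ k`, where the polynomials `B i` have coefficient vectors `b i`;
it is empty if all constant coefficients of the `B i` vanish. -/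
noncomputable def truncatedKernel (z : K) (b : Fin s → Fin k → K) : Finset (Fin k → K) :=
  open scoped Classical in
  Finset.univ.filter fun v => (∃ i, (ofFn k (b i)).coeff 0 ≠ 0) ∧
    ∀ r < k, (∑ i, ofFn k (b i) * (ofFn k v).comp (C (z ^ (i : ℕ)) * X)).coeff r = 0

theorem card_truncatedKernel_le (z : K) (hz : 0 < orderOf z) (b : Fin s → Fin k → K) :
    (truncatedKernel z b).card ≤ Fintype.card K ^ (s * (k / orderOf z + 1)) := by
  classical
  by_cases hb : ∃ i, (ofFn k (b i)).coeff 0 ≠ 0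
  swap
  · simp [truncatedKernel, hb]
  set P : K[X] := ∑ i : Fin s, C ((ofFn k (b i)).coeff 0) * X ^ (i : ℕ) with hPdef
  have hcoeff : ∀ i : Fin s, P.coeff i = (ofFn k (b i)).coeff 0 := by
    intro i
    simp only [hPdef, finsetSum_coeff, coeff_C_mul_X_pow]
    rw [Finset.sum_eq_single i]
    · simp
    · intro j _ hj
      rw [if_neg fun h => hj (Fin.ext h.symm)]
    · simp
  obtain ⟨i₀, hi₀⟩ := hb
  have hP : P ≠ 0 := fun h => hi₀ (by rw [← hcoeff, h, coeff_zero])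
  have hdeg : P.natDegree < s := by
    have : P.degree < s := by
      refine (degree_sum_le _ _).trans_lt ((Finset.sup_lt_iff (WithBot.bot_lt_coe s)).2 fun i _ => ?_)
      exact (degree_C_mul_X_pow_le _ _).trans_lt (Nat.cast_lt.2 i.2)
    exact (natDegree_lt_iff_degree_lt hP).2 this
  let bad : Finset (Fin k) := Finset.univ.filter fun r => P.eval (z ^ (r : ℕ)) = 0
  have hinj : Set.InjOn (fun (v : Fin k → K) (r : bad) => v r) (truncatedKernel z b : Set _) := by
    intro v hv w hw hvw
    simp only [truncatedKernel, Finset.coe_filter, Finset.mem_univ, true_and,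
      Set.mem_ofPred_eq] at hv hw
    have hzero := coeff_eq_zero_of_sum_mul_comp_coeff_eq_zero (fun i => ofFn k (b i)) z
      (ofFn k (v - w)) k (fun r hr => ?_) (fun r hr h0 => ?_)
    · ext r
      have := hzero r r.2
      rw [ofFn_coeff_eq_val_of_lt _ r.2] at this
      simpa [sub_eq_zero] using this
    · simp only [map_sub, sub_comp, mul_sub, Finset.sum_sub_distrib, coeff_sub, hv.2 r hr,
        hw.2 r hr, sub_zero]
    · rw [ofFn_coeff_eq_val_of_lt _ hr]
      have := congrFun hvw ⟨⟨r, hr⟩, by simpa [bad] using h0⟩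
      simpa [sub_eq_zero] using this
  calc (truncatedKernel z b).card ≤ (Finset.univ : Finset (bad → K)).card :=
        Finset.card_le_card_of_injOn _ (fun _ _ => by simp) hinj
    _ = Fintype.card K ^ bad.card := by
        rw [Finset.card_univ, Fintype.card_fun, Fintype.card_coe]
    _ ≤ _ := Nat.pow_le_pow_right Fintype.card_pos (card_filter_isRoot_pow_le P hP hdeg z hz k)

/-- Truncating the multipliers at `X ^ k` does not affect membership in `truncatedKernel`. -/
theorem toFn_mem_truncatedKernel (z : K) (hk : 0 < k) (B : Fin s → K[X])
    (hB : ∃ i, (B i).coeff 0 ≠ 0) (v : Fin k → K)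
    (hf : ∑ i, B i * (ofFn k v).comp (C (z ^ (i : ℕ)) * X) = 0) :
    v ∈ truncatedKernel z fun i => toFn k (B i) := by
  have hcoeff : ∀ i, ∀ u < k, (ofFn k (toFn k (B i))).coeff u = (B i).coeff u := by
    intro i u hu
    rw [ofFn_coeff_eq_val_of_lt _ hu]
    simp [toFn]
  simp only [truncatedKernel, Finset.mem_filter, Finset.mem_univ, true_and]
  refine ⟨?_, fun r hr => ?_⟩
  · obtain ⟨i, hi⟩ := hB
    exact ⟨i, by rwa [hcoeff i 0 hk]⟩
  · have h := congrArg (fun p => p.coeff r) hf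
    simp only [coeff_zero, finsetSum_coeff, coeff_mul] at h ⊢
    rw [← h]
    refine Finset.sum_congr rfl fun i _ => Finset.sum_congr rfl fun p hp => ?_
    rw [hcoeff i p.1 (by rw [Finset.HasAntidiagonal.mem_antidiagonal] at hp; omega)]

end TruncatedKernel

/-- The evaluation points of the folded code are distinct. -/
theorem injective_pow_mul_pow {M : Type*} [Monoid M] {γ : M} {ℓ N : ℕ}
    (hγ : orderOf γ = ℓ * N) :
    Function.Injective fun p : Fin ℓ × Fin N => (γ ^ N) ^ (p.1 : ℕ) * γ ^ (p.2 : ℕ) := by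
  rintro ⟨i, j⟩ ⟨i', j'⟩ h
  have hlt : ∀ (i : Fin ℓ) (j : Fin N), N * (i : ℕ) + j < orderOf γ := by
    intro i j
    rw [hγ]
    have := i.2
    have := j.2
    calc N * (i : ℕ) + j < N * (i : ℕ) + N := by omega
      _ = (i + 1) * N := by ring
      _ ≤ ℓ * N := Nat.mul_le_mul_right _ i.2
  simp only [← pow_mul, ← pow_add] at h
  have h' : N * (i : ℕ) + j = N * (i' : ℕ) + j' :=
    pow_injOn_Iio_orderOf (hlt i j) (hlt i' j') h
  have hN : 0 < N := j.pos
  have hi : (i : ℕ) = i' := by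
    have := congrArg (· / N) h'
    simpa [Nat.mul_add_div hN, Nat.div_eq_of_lt j.2, Nat.div_eq_of_lt j'.2] using this
  have hj : (j : ℕ) = j' := by rw [hi] at h'; omega
  rw [Fin.ext hi, Fin.ext hj]

section FoldedCode

variable {K : Type*} [Field K]

/-- A common power of `X` can be cancelled from a nonzero family of polynomials. -/
theorem exists_eq_X_pow_mul_coeff_zero_ne_zero {ι : Type*} (A : ι → K[X]) (hA : A ≠ 0) :
    ∃ (e : ℕ) (B : ι → K[X]), (∀ i, A i = X ^ e * B i) ∧ ∃ i, (B i).coeff 0 ≠ 0 := by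
  classical
  have hex : ∃ e, ∃ i, (A i).coeff e ≠ 0 := by
    by_contra! h
    exact hA (funext fun i => Polynomial.ext fun e => by simpa using h e i)
  have hdvd : ∀ i, X ^ Nat.find hex ∣ A i := fun i =>
    X_pow_dvd_iff.2 fun d hd => by
      have := Nat.find_min hex hd
      push Not at this
      exact this i
  choose B hB using hdvd
  obtain ⟨i, hi⟩ := Nat.find_spec hex
  refine ⟨_, B, hB, i, fun h => hi ?_⟩
  rw [hB i, coeff_X_pow_mul', if_pos le_rfl, Nat.sub_self, h]

/-- Interpolation: the polynomials agreeing with a received array on many columns satisfy a common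
nontrivial linear functional equation. -/
theorem exists_sum_mul_comp_eq_zero {γ : K} {ℓ N : ℕ} (hγ : orderOf γ = ℓ * N)
    (hpos : 0 < ℓ * N) (k D s : ℕ) (hk : 0 < k) (hD : ℓ * N < s * (D + 1))
    (y : Fin ℓ → Fin N → K) :
    ∃ B : Fin s → K[X], (∃ i, (B i).coeff 0 ≠ 0) ∧ ∀ f : K[X], f.natDegree < k →
      D + k ≤ ℓ * Nat.card {j : Fin N // ∀ i : Fin ℓ,
        f.eval ((γ ^ N) ^ (i : ℕ) * γ ^ (j : ℕ)) = y i j} →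
      ∑ i, B i * f.comp (C ((γ ^ N) ^ (i : ℕ)) * X) = 0 := by
  classical
  have hℓ : 0 < ℓ := Nat.pos_of_mul_pos_right hpos
  have hζ : (γ ^ N) ^ ℓ = 1 := by rw [← pow_mul, mul_comm, ← hγ, pow_orderOf_eq_one]
  set ζ := γ ^ N with hζdef
  let Φ : (Fin s → Fin (D + 1) → K) →ₗ[K] (Fin ℓ × Fin N → K) :=
    { toFun := fun a p => ∑ t : Fin s, (ofFn (D + 1) (a t)).eval (ζ ^ (p.1 : ℕ) * γ ^ (p.2 : ℕ)) *
        y ⟨(p.1 + t) % ℓ, Nat.mod_lt _ hℓ⟩ p.2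
      map_add' := fun a b => by
        ext p
        simp [add_mul, Finset.sum_add_distrib]
      map_smul' := fun c a => by
        ext p
        simp [Finset.mul_sum, mul_assoc] }
  have hker : Φ.ker ≠ ⊥ := LinearMap.ker_ne_bot_of_finrank_lt
    (by simpa [Module.finrank_pi_fintype] using hD)
  obtain ⟨a, ha, ha0⟩ := (Submodule.ne_bot_iff _).1 hker
  have hA : (fun t => ofFn (D + 1) (a t)) ≠ 0 := by
    intro h
    refine ha0 (funext fun t => injective_ofFn (D + 1) ?_)
    simpa using congrFun h t
  obtain ⟨e, B, hB, hB0⟩ := exists_eq_X_pow_mul_coeff_zero_ne_zero _ hA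
  refine ⟨B, hB0, fun f hf hagree => ?_⟩
  have hzero : ∑ t : Fin s, ofFn (D + 1) (a t) * f.comp (C (ζ ^ (t : ℕ)) * X) = 0 := by
    refine eq_zero_of_natDegree_lt_card_of_eval_eq_zero _
      (ι := Fin ℓ × {j : Fin N // ∀ i : Fin ℓ, f.eval (ζ ^ (i : ℕ) * γ ^ (j : ℕ)) = y i j})
      (f := fun p => ζ ^ (p.1 : ℕ) * γ ^ ((p.2 : Fin N) : ℕ)) ?_ ?_ ?_
    · rintro ⟨i, j⟩ ⟨i', j'⟩ h
      have := injective_pow_mul_pow hγ (a₁ := (i, j.1)) (a₂ := (i', j'.1)) h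
      simp only [Prod.mk.injEq] at this
      rw [this.1, Subtype.ext this.2]
    · rintro ⟨i, j, hj⟩
      have h := congrFun (LinearMap.mem_ker.1 ha) (i, j)
      simp only [Φ, LinearMap.coe_mk, AddHom.coe_mk, Pi.zero_apply] at h
      rw [eval_finsetSum, ← h]
      refine Finset.sum_congr rfl fun t _ => ?_
      rw [eval_mul, eval_comp, ← hj ⟨_, _⟩]
      congr 2
      simp only [eval_mul, eval_C, eval_X, ← pow_eq_pow_mod _ hζ, pow_add]
      ring
    · rw [Fintype.card_prod, Fintype.card_fin, ← Nat.card_eq_fintype_card]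
      refine lt_of_lt_of_le ?_ hagree
      refine Nat.lt_of_le_of_lt (natDegree_sum_le_of_forall_le _ _ (n := D + (k - 1)) ?_) (by omega)
      intro t _
      refine natDegree_mul_le_of_le ?_ ?_
      · exact Nat.le_of_lt_succ (ofFn_natDegree_lt (by omega) _)
      · refine natDegree_comp_le.trans ?_
        calc f.natDegree * (C (ζ ^ (t : ℕ)) * X : K[X]).natDegree ≤ f.natDegree * 1 :=
              Nat.mul_le_mul_left _ ((natDegree_C_mul_le _ _).trans natDegree_X_le)
          _ ≤ k - 1 := by omega
  simp only [hB, mul_assoc, ← Finset.mul_sum] at hzero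
  exact (mul_eq_zero.1 hzero).resolve_left (pow_ne_zero _ X_ne_zero)

/-- When the degree bound is at most the folding parameter, agreement sets are disjoint, so few
codewords agree with a given array on an `ε` fraction of the columns. -/
theorem card_filter_agree_mul_le_one [Fintype K] [DecidableEq K] {γ : K} {ℓ N k : ℕ}
    (hγ : orderOf γ = ℓ * N) (hN : 0 < N) (hk : 0 < k) (hkℓ : k ≤ ℓ) (ε : ℝ)
    (y : Fin ℓ → Fin N → K) (F : Finset (Fin k → K))
    (hF : ∀ v ∈ F, ε * N ≤ (Nat.card {j : Fin N // ∀ i : Fin ℓ,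
      (ofFn k v).eval ((γ ^ N) ^ (i : ℕ) * γ ^ (j : ℕ)) = y i j} : ℝ)) :
    F.card * ε ≤ 1 := by
  classical
  let A (v : Fin k → K) : Finset (Fin N) := Finset.univ.filter fun j => ∀ i : Fin ℓ,
    (ofFn k v).eval ((γ ^ N) ^ (i : ℕ) * γ ^ (j : ℕ)) = y i j
  have hA : ∀ v ∈ F, ε * N ≤ (A v).card := by
    intro v hv
    refine (hF v hv).trans_eq ?_
    rw [Nat.card_eq_fintype_card, Fintype.card_subtype]
  have hdisj : ∀ v ∈ F, ∀ w ∈ F, v ≠ w → Disjoint (A v) (A w) := by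
    intro v _ w _ hvw
    rw [Finset.disjoint_left]
    intro j hj hj'
    simp only [A, Finset.mem_filter, Finset.mem_univ, true_and] at hj hj'
    refine hvw (injective_ofFn k (sub_eq_zero.1 ?_))
    rw [← map_sub]
    refine eq_zero_of_natDegree_lt_card_of_eval_eq_zero _
      (f := fun i : Fin ℓ => (γ ^ N) ^ (i : ℕ) * γ ^ (j : ℕ)) ?_ (fun i => ?_) ?_
    · intro i i' h
      exact congrArg Prod.fst (injective_pow_mul_pow hγ (a₁ := (i, j)) (a₂ := (i', j)) h)
    · rw [map_sub, eval_sub, hj i, hj' i, sub_self]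
    · rw [Fintype.card_fin]
      exact (ofFn_natDegree_lt hk _).trans_le hkℓ
  have hcard : ∑ v ∈ F, (A v).card ≤ N := by
    rw [← Finset.card_biUnion hdisj]
    simpa using Finset.card_le_univ (F.biUnion A)
  have hsum : (F.card : ℝ) * (ε * N) ≤ N :=
    calc (F.card : ℝ) * (ε * N) = ∑ v ∈ F, ε * N := by rw [Finset.sum_const, nsmul_eq_mul]
      _ ≤ ∑ v ∈ F, ((A v).card : ℝ) := Finset.sum_le_sum hA
      _ ≤ N := by exact_mod_cast hcard
  have hN' : (0 : ℝ) < N := by exact_mod_cast hN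
  refine le_of_mul_le_mul_right ?_ hN'
  linarith

/-- For degree bound at least the folding parameter `8 s ^ 2`, there is a large list-decodable
subcode. -/
theorem exists_finset_card_filter_agree_lt [Fintype K] [DecidableEq K] {γ : K} {s N k : ℕ}
    (hs : 0 < s) (hN : 0 < N) (hγ : orderOf γ = 8 * s ^ 2 * N) (hk : 8 * s ^ 2 ≤ k) :
    ∃ F : Finset (Fin k → K), Fintype.card K ^ k ≤ Fintype.card K ^ (k / s) * F.card ∧
      ∀ (y : Fin (8 * s ^ 2) → Fin N → K) (D : ℕ), 8 * s ^ 2 * N < s * (D + 1) →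
        (F.filter fun v => D + k ≤ 8 * s ^ 2 * Nat.card {j : Fin N // ∀ i : Fin (8 * s ^ 2),
          (ofFn k v).eval ((γ ^ N) ^ (i : ℕ) * γ ^ (j : ℕ)) = y i j}).card < 4 * s ^ 2 := by
  have hℓ : 0 < 8 * s ^ 2 := by positivity
  have hk0 : 0 < k := hℓ.trans_le hk
  have hζ : orderOf (γ ^ N) = 8 * s ^ 2 := by
    rw [orderOf_pow_of_dvd hN.ne' (hγ ▸ Dvd.intro_left _ rfl), hγ, Nat.mul_div_cancel _ hN]
  have hexp : k * s + s * (k / (8 * s ^ 2) + 1) * (4 * s ^ 2) + k / s < k / s * (4 * s ^ 2) := by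
    have ha : 1 ≤ k / (8 * s ^ 2) := (Nat.one_le_div_iff hℓ).2 hk
    have hak : 8 * s ^ 2 * (k / (8 * s ^ 2)) ≤ k := Nat.mul_div_le _ _
    have hek : k < s * (k / s + 1) := Nat.lt_mul_div_succ k hs
    generalize k / (8 * s ^ 2) = a at *
    generalize k / s = e at *
    have hae : 8 * s * a < e + 1 := by
      refine lt_of_mul_lt_mul_left (a := s) ?_ (Nat.zero_le _)
      calc s * (8 * s * a) = 8 * s ^ 2 * a := by ring
        _ < _ := hak.trans_lt hek
    have hae' : 8 * s * a ≤ e := by omega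
    have he : 8 ≤ e := le_trans (by nlinarith) hae'
    have h1 : k * s < s ^ 2 * (e + 1) := by nlinarith
    have h2 : s * (a + 1) * (4 * s ^ 2) ≤ s ^ 2 * e := by
      calc s * (a + 1) * (4 * s ^ 2) ≤ s * (a + a) * (4 * s ^ 2) := by gcongr
        _ = s ^ 2 * (8 * s * a) := by ring
        _ ≤ _ := by gcongr
    have hs2 : 1 ≤ s ^ 2 := Nat.one_le_pow _ _ hs
    nlinarith
  obtain ⟨F, hF, hFH⟩ := exists_large_finset_card_inter_lt
    (fun b : Fin s → Fin k → K => truncatedKernel (γ ^ N) b)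
    (Fintype.card K ^ (s * (k / (8 * s ^ 2) + 1))) (Fintype.card K ^ (k / s)) (4 * s ^ 2)
    (pow_pos Fintype.card_pos _)
    (fun b => hζ ▸ card_truncatedKernel_le (γ ^ N) (hζ ▸ hℓ) b)
    (by
      simp only [Fintype.card_fun, Fintype.card_fin, ← pow_mul, ← pow_add]
      exact Nat.pow_lt_pow_right Fintype.one_lt_card hexp)
  refine ⟨F, by simpa using hF, fun y D hD => ?_⟩
  obtain ⟨B, hB0, hB⟩ := exists_sum_mul_comp_eq_zero hγ (by positivity) k D s hk0 hD y
  refine (Finset.card_le_card fun v hv => ?_).trans_lt (hFH fun i => toFn k (B i))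
  rw [Finset.mem_filter] at hv
  exact Finset.mem_inter.2 ⟨hv.1, toFn_mem_truncatedKernel (γ ^ N) hk0 B hB0 v
    (hB _ (ofFn_natDegree_lt hk0 v) hv.2)⟩

end FoldedCode

theorem card_subtype_image_and {α β : Type*} {g : α → β} (hg : Function.Injective g)
    (F : Finset α) (P : β → Prop) [DecidablePred fun a => P (g a)] :
    Nat.card {b // b ∈ g '' (F : Set α) ∧ P b} = (F.filter fun a => P (g a)).card := by
  classical
  rw [← Finset.card_image_of_injective _ hg, ← Nat.card_eq_finsetCard]
  refine Nat.card_congr (Equiv.subtypeEquivRight fun b => ?_)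
  simp only [Set.mem_image, Finset.mem_coe, Finset.mem_image, Finset.mem_filter]
  constructor
  · rintro ⟨⟨a, ha, rfl⟩, hP⟩
    exact ⟨a, ⟨ha, hP⟩, rfl⟩
  · rintro ⟨a, ⟨ha, hP⟩, rfl⟩
    exact ⟨⟨a, ha, rfl⟩, hP⟩

theorem rpow_le_of_pow_le_pow_mul {q k e n : ℕ} {ε : ℝ} (hq : 0 < q) (he : (e : ℝ) ≤ ε * k)
    (h : q ^ k ≤ q ^ e * n) : (q : ℝ) ^ ((1 - ε) * k) ≤ n := by
  have hq0 : (0 : ℝ) < q := by exact_mod_cast hq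
  have hpow : (0 : ℝ) < (q : ℝ) ^ e := by positivity
  refine le_of_mul_le_mul_left ?_ hpow
  calc (q : ℝ) ^ e * (q : ℝ) ^ ((1 - ε) * k) = (q : ℝ) ^ ((e : ℝ) + (1 - ε) * k) := by
        rw [Real.rpow_add hq0, Real.rpow_natCast]
    _ ≤ (q : ℝ) ^ (k : ℝ) :=
        Real.rpow_le_rpow_of_exponent_le (by exact_mod_cast hq) (by linarith)
    _ = (q : ℝ) ^ k := Real.rpow_natCast _ _
    _ ≤ (q : ℝ) ^ e * n := by exact_mod_cast h

/-- There is an absolute constant `C > 0` such that for every `ε ∈ (0,1)`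
there are positive integers `s ≤ C/ε` and `ℓ ≤ C/ε²` with the following property. For any
prime power `q` with `ℓ ∣ q - 1`, any generator `γ` of `F_q^*`, `N = (q-1)/ℓ`, `ζ = γ^N`,
and any `k, a ≥ 1` with `a ∣ k` such that some monic irreducible `R ∈ F_q[X]` of degree
`≥ k` divides `X^(q^a) - ζX`, there is a set `ℱ` of polynomials of degree `≤ k - 1` with
`|ℱ| ≥ q^((1-ε)k)` such that for every received array `(y_{i,j}) ∈ F_q^{ℓ×N}`, at most
`(C/ε)^(C/ε)` polynomials `f ∈ ℱ` have folded encoding agreeing with `y` on at least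
`(k/(ℓN) + ε)·N` columns. -/
theorem stmt_14 :
    ∃ C : ℝ, 0 < C ∧
      ∀ ε : ℝ, 0 < ε → ε < 1 →
        ∃ s ℓ : ℕ, 0 < s ∧ 0 < ℓ ∧ (s : ℝ) ≤ C / ε ∧ (ℓ : ℝ) ≤ C / ε ^ 2 ∧
          ∀ (Fq : Type) [Field Fq] [Fintype Fq],
            ℓ ∣ Fintype.card Fq - 1 →
            ∀ γ : Fq, orderOf γ = Fintype.card Fq - 1 →
            ∀ N : ℕ, ℓ * N = Fintype.card Fq - 1 →
            ∀ ζ : Fq, ζ = γ ^ N →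
            ∀ k a : ℕ, 0 < k → 0 < a → a ∣ k →
              (∃ R : Polynomial Fq, R.Monic ∧ Irreducible R ∧ k ≤ R.natDegree ∧
                R ∣ (X ^ (Fintype.card Fq ^ a) - Polynomial.C ζ * X)) →
              ∃ ℱ : Set (Polynomial Fq),
                (∀ f ∈ ℱ, f.natDegree ≤ k - 1) ∧
                (Fintype.card Fq : ℝ) ^ ((1 - ε) * k) ≤ (Nat.card ℱ : ℝ) ∧
                ∀ y : Fin ℓ → Fin N → Fq,
                  (Nat.card {f : Polynomial Fq // f ∈ ℱ ∧
                      ((k : ℝ) / (ℓ * N) + ε) * N ≤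
                        (Nat.card {j : Fin N // ∀ i : Fin ℓ,
                          f.eval (ζ ^ (i : ℕ) * γ ^ (j : ℕ)) = y i j} : ℝ)} : ℝ)
                    ≤ (C / ε) ^ (C / ε) := by
  refine ⟨32, by norm_num, fun ε hε hε1 => ?_⟩
  set s := ⌈1 / ε⌉₊
  have hs1 : 1 / ε ≤ s := Nat.le_ceil _
  have hs2 : (s : ℝ) ≤ 2 / ε := by
    have h1 : (s : ℝ) < 1 / ε + 1 := Nat.ceil_lt_add_one (by positivity)
    have h2 : 1 ≤ 1 / ε := by rw [le_div_iff₀ hε]; linarith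
    have h3 : 2 / ε = 1 / ε + 1 / ε := by ring
    linarith
  have hs : 0 < s := Nat.ceil_pos.2 (by positivity)
  have hsq : (s : ℝ) ^ 2 ≤ 4 / ε ^ 2 :=
    calc (s : ℝ) ^ 2 ≤ (2 / ε) ^ 2 := by gcongr
      _ = 4 / ε ^ 2 := by rw [div_pow]; norm_num
  have hsε : 1 ≤ s * ε := by rwa [div_le_iff₀ hε] at hs1
  have hbound : 16 / ε ^ 2 ≤ (32 / ε) ^ (32 / ε) := by
    have h32 : 32 ≤ 32 / ε := by rw [le_div_iff₀ hε]; linarith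
    calc 16 / ε ^ 2 ≤ 1024 / ε ^ 2 := by gcongr; norm_num
      _ = (32 / ε) ^ (2 : ℝ) := by rw [Real.rpow_two, div_pow]; norm_num
      _ ≤ (32 / ε) ^ (32 / ε) :=
        Real.rpow_le_rpow_of_exponent_le (by linarith) (by linarith)
  refine ⟨s, 8 * s ^ 2, hs, by positivity, hs2.trans (by gcongr; norm_num), ?_, ?_⟩
  · push_cast
    calc 8 * (s : ℝ) ^ 2 ≤ 8 * (4 / ε ^ 2) := by gcongr
      _ = 32 / ε ^ 2 := by ring
  intro K _ _ _ γ hγ N hN ζ hζ k a hk _ _ _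
  subst hζ
  classical
  have hγ' : orderOf γ = 8 * s ^ 2 * N := hγ.trans hN.symm
  have hN0 : 0 < N := by
    have := Fintype.one_lt_card (α := K)
    exact Nat.pos_of_mul_pos_left (by omega : 0 < 8 * s ^ 2 * N)
  suffices h : ∃ (F : Finset (Fin k → K)) (e : ℕ), (e : ℝ) ≤ ε * k ∧
      Fintype.card K ^ k ≤ Fintype.card K ^ e * F.card ∧
      ∀ y : Fin (8 * s ^ 2) → Fin N → K, ((F.filter fun v =>
        ((k : ℝ) / ((8 * s ^ 2 : ℕ) * N) + ε) * N ≤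
          (Nat.card {j : Fin N // ∀ i : Fin (8 * s ^ 2),
            (ofFn k v).eval ((γ ^ N) ^ (i : ℕ) * γ ^ (j : ℕ)) = y i j} : ℝ)).card : ℝ)
        ≤ 16 / ε ^ 2 by
    obtain ⟨F, e, he, hcard, hlist⟩ := h
    refine ⟨ofFn k '' (F : Set (Fin k → K)), ?_, ?_, fun y => ?_⟩
    · rintro _ ⟨v, -, rfl⟩
      have := ofFn_natDegree_lt hk v
      omega
    · rw [Nat.card_image_of_injective (injective_ofFn k), Nat.card_coe_set_eq, Set.ncard_coe_finset]
      exact rpow_le_of_pow_le_pow_mul Fintype.card_pos he hcard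
    · rw [card_subtype_image_and (injective_ofFn k)]
      exact (hlist y).trans hbound
  have hN' : (0 : ℝ) < N := by exact_mod_cast hN0
  have hs' : (0 : ℝ) < s := by exact_mod_cast hs
  rcases le_total k (8 * s ^ 2) with hkℓ | hkℓ
  · refine ⟨Finset.univ, 0, by simpa using by positivity, by simp, fun y => ?_⟩
    have h := card_filter_agree_mul_le_one hγ' hN0 hk hkℓ ε y (Finset.univ.filter fun v =>
        ((k : ℝ) / ((8 * s ^ 2 : ℕ) * N) + ε) * N ≤
          (Nat.card {j : Fin N // ∀ i : Fin (8 * s ^ 2),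
            (ofFn k v).eval ((γ ^ N) ^ (i : ℕ) * γ ^ (j : ℕ)) = y i j} : ℝ)) (fun v hv => by
      refine le_trans ?_ (Finset.mem_filter.1 hv).2
      gcongr
      exact le_add_of_nonneg_left (by positivity))
    rw [← le_div_iff₀ hε] at h
    refine h.trans ?_
    rw [div_le_div_iff₀ hε (by positivity)]
    nlinarith
  · obtain ⟨F, hF, hlist⟩ := exists_finset_card_filter_agree_lt hs hN0 hγ' hkℓ
    refine ⟨F, k / s, ?_, hF, fun y => ?_⟩
    · calc ((k / s : ℕ) : ℝ) ≤ k / s := Nat.cast_div_le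
        _ ≤ ε * k := by
          rw [div_le_iff₀ hs']
          nlinarith [(Nat.cast_nonneg k : (0 : ℝ) ≤ k)]
    · have hD : 8 * s ^ 2 * N < s * (⌊ε * (8 * s ^ 2 * N : ℕ)⌋₊ + 1) := by
        have h1 := Nat.lt_floor_add_one (ε * (8 * s ^ 2 * N : ℕ))
        have h2 : ((8 * s ^ 2 * N : ℕ) : ℝ) < s * (⌊ε * (8 * s ^ 2 * N : ℕ)⌋₊ + 1) :=
          calc ((8 * s ^ 2 * N : ℕ) : ℝ) ≤ s * ε * (8 * s ^ 2 * N : ℕ) :=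
                le_mul_of_one_le_left (by positivity) hsε
            _ = s * (ε * (8 * s ^ 2 * N : ℕ)) := by ring
            _ < _ := by gcongr
        exact_mod_cast h2
      have hlt := hlist y _ hD
      calc _ ≤ ((4 * s ^ 2 : ℕ) : ℝ) := by
            refine Nat.cast_le.2 ((Finset.card_le_card ?_).trans hlt.le)
            refine Finset.monotone_filter_right F fun v _ hv => ?_
            have hfl := Nat.floor_le (a := ε * (8 * s ^ 2 * N : ℕ)) (by positivity)
            have hv' := mul_le_mul_of_nonneg_left hv
              (by positivity : (0 : ℝ) ≤ ((8 * s ^ 2 : ℕ) : ℝ))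
            have heq : ((8 * s ^ 2 : ℕ) : ℝ) * (((k : ℝ) / ((8 * s ^ 2 : ℕ) * N) + ε) * N)
                = ε * (8 * s ^ 2 * N : ℕ) + k := by
              push_cast
              field_simp
              ring
            rw [heq] at hv'
            have := (add_le_add_left hfl (k : ℝ)).trans hv'
            exact_mod_cast this
        _ ≤ 16 / ε ^ 2 := by
            push_cast
            calc 4 * (s : ℝ) ^ 2 ≤ 4 * (4 / ε ^ 2) := by gcongr
              _ = 16 / ε ^ 2 := by ring
end

section
/- Let q be a prime power, γ a generator of F_q^*, ℓ a divisor of q−1, N = (q−1)/ℓ, and ζ = γ^N. Let f, g ∈ F_q[X] be distinct polynomials of degree at most k−1, where k ≤ ℓN. Then the number of indices j ∈ {0,…,N−1} such that f(ζ^i γ^j) = g(ζ^i γ^j) for all 0 ≤ i < ℓ is at most (k−1)/ℓ. Consequently, the low-order folded Reed–Solomon code of dimension k has minimum column distance at least N − (k−1)/ℓ. -/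
open Polynomial

/-- The points `(γ ^ N) ^ i * γ ^ j` of the folding array are pairwise distinct. -/
theorem injective_foldedPoint {M : Type*} [Monoid M] {γ : M} {ℓ N : ℕ}
    (hγ : orderOf γ = ℓ * N) :
    Function.Injective fun p : Fin N × Fin ℓ => (γ ^ N) ^ (p.2 : ℕ) * γ ^ (p.1 : ℕ) := by
  rintro ⟨j, i⟩ ⟨j', i'⟩ h
  simp only [← pow_mul, ← pow_add] at h
  have lt_orderOf (i : Fin ℓ) (j : Fin N) : N * (i : ℕ) + j < orderOf γ := by
    rw [hγ]
    nlinarith [i.isLt, j.isLt, Nat.mul_le_mul_left N (Nat.succ_le_of_lt i.isLt)]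
  have key : N * (i : ℕ) + j = N * (i' : ℕ) + j' :=
    pow_injOn_Iio_orderOf (lt_orderOf i j) (lt_orderOf i' j') h
  have hN : 0 < N := j.pos
  have hi : (i : ℕ) = i' := by
    simpa [Nat.mul_add_div hN, Nat.div_eq_of_lt] using congrArg (· / N) key
  have hj : (j : ℕ) = j' := by
    simpa [Nat.mul_add_mod, Nat.mod_eq_of_lt] using congrArg (· % N) key
  exact Prod.ext (Fin.ext hj) (Fin.ext hi)

/-- A finite family of distinct points at which two distinct polynomials agree has at most as many
members as any common bound on their degrees. -/
theorem Polynomial.card_le_of_eval_eq {R ι : Type*} [CommRing R] [IsDomain R] {f g : R[X]}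
    (hne : f ≠ g) {d : ℕ} (hf : f.natDegree ≤ d) (hg : g.natDegree ≤ d) {x : ι → R}
    (hx : Function.Injective x) (h : ∀ a, f.eval (x a) = g.eval (x a)) : Nat.card ι ≤ d := by
  classical
  have hroot (a : ι) : x a ∈ (f - g).roots.toFinset := by
    simp [sub_ne_zero.mpr hne, h a]
  calc Nat.card ι ≤ Nat.card (f - g).roots.toFinset :=
        Nat.card_le_card_of_injective (fun a => ⟨x a, hroot a⟩)
          fun a b hab => hx (congrArg Subtype.val hab)
    _ = (f - g).roots.toFinset.card := Nat.card_eq_finsetCard _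
    _ ≤ Multiset.card (f - g).roots := Multiset.toFinset_card_le _
    _ ≤ (f - g).natDegree := card_roots' _
    _ ≤ d := (natDegree_sub_le f g).trans (max_le hf hg)

/-- Distance of the low-order folded Reed–Solomon code: if `f ≠ g` have
degree `≤ k - 1` with `k ≤ ℓN`, then the number of columns `j ∈ {0,…,N-1}` on which the
folded encodings of `f` and `g` agree (i.e. `f(ζ^i γ^j) = g(ζ^i γ^j)` for all `0 ≤ i < ℓ`)
is at most `(k-1)/ℓ`; consequently the number of columns on which they differ is at least
`N - (k-1)/ℓ`. -/
theorem stmt_15 (Fq : Type) [Field Fq] [Fintype Fq] (γ : Fq)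
    (hγ : orderOf γ = Fintype.card Fq - 1) (ℓ N : ℕ) (hℓ : 0 < ℓ)
    (hN : ℓ * N = Fintype.card Fq - 1) (ζ : Fq) (hζ : ζ = γ ^ N)
    (k : ℕ) (hk1 : 1 ≤ k) (hk2 : k ≤ ℓ * N)
    (f g : Polynomial Fq) (hf : f.natDegree ≤ k - 1) (hg : g.natDegree ≤ k - 1)
    (hne : f ≠ g) :
    (Nat.card {j : Fin N // ∀ i : Fin ℓ,
        f.eval (ζ ^ (i : ℕ) * γ ^ (j : ℕ)) = g.eval (ζ ^ (i : ℕ) * γ ^ (j : ℕ))} : ℝ)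
      ≤ ((k : ℝ) - 1) / ℓ ∧
    (N : ℝ) - ((k : ℝ) - 1) / ℓ ≤
      (Nat.card {j : Fin N // ∃ i : Fin ℓ,
        f.eval (ζ ^ (i : ℕ) * γ ^ (j : ℕ)) ≠ g.eval (ζ ^ (i : ℕ) * γ ^ (j : ℕ))} : ℝ) := by
  subst hζ
  set agree : Fin N → Prop := fun j => ∀ i : Fin ℓ,
    f.eval ((γ ^ N) ^ (i : ℕ) * γ ^ (j : ℕ)) = g.eval ((γ ^ N) ^ (i : ℕ) * γ ^ (j : ℕ))
    with hagree
  have hcard : Nat.card {j // agree j} * ℓ ≤ k - 1 := by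
    have := card_le_of_eval_eq hne hf hg (ι := {j // agree j} × Fin ℓ)
      ((injective_foldedPoint (hγ.trans hN.symm)).comp
        (Function.Injective.prodMap Subtype.val_injective Function.injective_id))
      fun a => a.1.2 a.2
    simpa using this
  have hbound : (Nat.card {j // agree j} : ℝ) ≤ ((k : ℝ) - 1) / ℓ := by
    rw [le_div_iff₀ (by exact_mod_cast hℓ), ← Nat.cast_one, ← Nat.cast_sub hk1]
    exact_mod_cast hcard
  have hcompl : Nat.card {j // agree j} + Nat.card {j // ¬ agree j} = N := by
    classical
    rw [← Nat.card_sum, Nat.card_congr (Equiv.sumCompl agree), Nat.card_fin]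
  refine ⟨hbound, ?_⟩
  simp only [hagree, not_forall] at hcompl hbound
  have hcompl' := congrArg (Nat.cast (R := ℝ)) hcompl
  push_cast at hcompl'
  linarith
end

section
/- Let q be a prime power, let ζ ∈ F_q^* have multiplicative order ℓ, and let a ≥ 1 be an integer. Then every monic irreducible factor of X^{q^a − 1} − ζ in F_q[X] has degree dividing aℓ; equivalently, X^{q^a−1} − ζ divides X^{q^{aℓ}−1} − 1 in F_q[X], so all roots of X^{q^a−1} − ζ lie in the field F_{q^{aℓ}}. -/
open Polynomial

/-- If `ζ ∈ F_q` satisfies `ζ ^ n = 1`, then `X ^ (q ^ a - 1) - ζ` divides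
`X ^ (q ^ (a * n) - 1) - 1`. -/
theorem X_pow_card_pow_sub_one_sub_C_dvd {K : Type*} [Field K] [Fintype K] {ζ : K} {n : ℕ}
    (hζ : ζ ^ n = 1) (a : ℕ) :
    (X ^ (Fintype.card K ^ a - 1) - C ζ : K[X]) ∣ X ^ (Fintype.card K ^ (a * n) - 1) - 1 := by
  set N := ∑ i ∈ Finset.range n, (Fintype.card K ^ a) ^ i
  have hN : Fintype.card K ^ (a * n) - 1 = (Fintype.card K ^ a - 1) * N := by
    rw [mul_comm _ N, geom_sum_mul_of_one_le (Nat.one_le_pow _ _ Fintype.card_pos), pow_mul]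
  have hζN : ζ ^ N = 1 := by
    simp [N, ← Finset.prod_pow_eq_pow_sum, ← pow_mul, FiniteField.pow_card_pow, hζ]
  have h := sub_dvd_pow_sub_pow (X ^ (Fintype.card K ^ a - 1)) (C ζ) N
  rwa [← pow_mul, ← hN, ← C_pow, hζN, C_1] at h

/-- Let `q` be a prime power, `ζ ∈ F_q^*` of multiplicative order `ℓ`, and
`a ≥ 1`. Then every monic irreducible factor of `X^(q^a - 1) - ζ` in `F_q[X]` has degree
dividing `a*ℓ`; equivalently `X^(q^a - 1) - ζ` divides `X^(q^(a*ℓ) - 1) - 1`, so every root of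
`X^(q^a - 1) - ζ` (in an algebraic closure) lies in the field `F_{q^(a*ℓ)}`, i.e. satisfies
`x^(q^(a*ℓ)) = x`. -/
theorem stmt_16 (Fq : Type) [Field Fq] [Fintype Fq] (ζ : Fq) (ℓ : ℕ) (hℓ : 0 < ℓ)
    (hζ : orderOf ζ = ℓ) (a : ℕ) (ha : 1 ≤ a) :
    (∀ P : Polynomial Fq, P.Monic → Irreducible P →
        P ∣ (X ^ (Fintype.card Fq ^ a - 1) - C ζ) → P.natDegree ∣ a * ℓ) ∧
    (X ^ (Fintype.card Fq ^ a - 1) - C ζ : Polynomial Fq) ∣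
        (X ^ (Fintype.card Fq ^ (a * ℓ) - 1) - 1) ∧
    (∀ x : AlgebraicClosure Fq,
        x ^ (Fintype.card Fq ^ a - 1) = algebraMap Fq (AlgebraicClosure Fq) ζ →
        x ^ (Fintype.card Fq ^ (a * ℓ)) = x) := by
  have hdvd := X_pow_card_pow_sub_one_sub_C_dvd (hζ ▸ pow_orderOf_eq_one ζ : ζ ^ ℓ = 1) a
  have hcard : Fintype.card Fq ^ (a * ℓ) - 1 + 1 = Fintype.card Fq ^ (a * ℓ) :=
    Nat.sub_add_cancel (Nat.one_le_pow _ _ Fintype.card_pos)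
  have hdvdX : (X ^ (Fintype.card Fq ^ a - 1) - C ζ : Fq[X]) ∣
      X ^ Fintype.card Fq ^ (a * ℓ) - X := by
    have h := hdvd.mul_right X
    rwa [sub_mul, one_mul, ← pow_succ, hcard] at h
  refine ⟨fun P _ hP hPdvd => ?_, hdvd, fun x hx => ?_⟩
  · refine hP.natDegree_dvd_of_dvd_X_pow_card_pow_sub_X ?_
    rw [Nat.card_eq_fintype_card]
    exact hPdvd.trans hdvdX
  · have h := map_dvd (aeval x) hdvdX
    simpa [hx, sub_eq_zero] using h
end

section
/- Let q be a prime power, let a and ℓ be distinct primes with a > 2ℓ and ℓ dividing q−1, and let ζ ∈ F_q^* have multiplicative order ℓ. Then the polynomial X^{q^a−1} − ζ has exactly q^a − 1 distinct roots, all lying in F_{q^{aℓ}}, and at least (q^a − 1)/2 of these roots have minimal polynomial over F_q of degree exactly aℓ (equivalently, at least half of the roots generate F_{q^{aℓ}} over F_q). -/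
/-- In a finite field with `n * m + 1` elements, the equation `x ^ n = z` with `z ≠ 0` and
`z ^ m = 1` has exactly `n` solutions. -/
theorem FiniteField.natCard_pow_eq {E : Type*} [Field E] [Fintype E] {n m : ℕ} (hn : 0 < n)
    (hm : 0 < m) (hE : Fintype.card E - 1 = n * m) {z : E} (hz : z ≠ 0) (hzm : z ^ m = 1) :
    Nat.card {x : E // x ^ n = z} = n := by
  classical
  obtain ⟨g, hg⟩ := IsCyclic.exists_ofOrder_eq_natCard (α := Eˣ)
  have horder : orderOf g = n * m := by
    rw [hg, Nat.card_eq_fintype_card, Fintype.card_units, hE]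
  have hprim : IsPrimitiveRoot (g : E) (n * m) := by
    rw [← horder]
    exact IsPrimitiveRoot.coe_units_iff.mpr (IsPrimitiveRoot.orderOf g)
  have hroot : ∃ α : E, α ^ n = z := by
    have : NeZero (n * m) := ⟨(Nat.mul_pos hn hm).ne'⟩
    obtain ⟨k, -, hk⟩ := hprim.eq_pow_of_pow_eq_one
      (show z ^ (n * m) = 1 by rw [mul_comm, pow_mul, hzm, one_pow])
    have hdvd : n * m ∣ k * m := by
      rw [← hprim.pow_eq_one_iff_dvd, pow_mul, hk, hzm]
    obtain ⟨j, rfl⟩ := Nat.dvd_of_mul_dvd_mul_right hm hdvd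
    exact ⟨(g : E) ^ j, by rw [← pow_mul, mul_comm, hk]⟩
  have hprimn : IsPrimitiveRoot ((g : E) ^ m) n :=
    hprim.pow (Nat.mul_pos hn hm) (mul_comm n m)
  have hcard := hprimn.card_nthRoots z
  rw [if_pos hroot] at hcard
  have hnodup := hprimn.nthRoots_nodup hz
  rw [← Multiset.toFinset_card_of_nodup hnodup] at hcard
  rw [← Set.ncard_coe_finset, ← Nat.card_coe_set_eq] at hcard
  refine Eq.trans ?_ hcard
  exact Nat.card_congr (Equiv.subtypeEquivRight fun x => by simp [Polynomial.mem_nthRoots hn])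

/-- An element of degree `d` over a finite field with `q` elements is fixed by `x ↦ x ^ q ^ e`
for every multiple `e` of `d`. -/
theorem FiniteField.pow_card_pow_of_natDegree_minpoly_dvd {F E : Type*} [Field F] [Fintype F]
    [Field E] [Finite E] [Algebra F E] {x : E} {e : ℕ} (h : (minpoly F x).natDegree ∣ e) :
    x ^ Fintype.card F ^ e = x := by
  have hx : IsIntegral F x := IsIntegral.of_finite F x
  obtain ⟨k, rfl⟩ := h
  have := Fintype.ofFinite (IntermediateField.adjoin F {x})
  have hcard : Fintype.card (IntermediateField.adjoin F {x}) =
      Fintype.card F ^ (minpoly F x).natDegree := by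
    rw [← IntermediateField.adjoin.finrank hx]
    exact Module.card_eq_pow_finrank
  have hfix := FiniteField.pow_card_pow k (IntermediateField.AdjoinSimple.gen F x)
  rw [hcard, ← pow_mul] at hfix
  simpa using congrArg (algebraMap _ E) hfix

/-- At most `n` elements of a field satisfy `x ^ n = x`, for `n ≥ 2`. -/
theorem natCard_pow_eq_self_le {E : Type*} [Field E] {n : ℕ} (hn : 1 < n) :
    Nat.card {x : E // x ^ n = x} ≤ n := by
  classical
  have hne : (Polynomial.X ^ n - Polynomial.X : Polynomial E) ≠ 0 :=
    FiniteField.X_pow_card_sub_X_ne_zero E hn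
  calc Nat.card {x : E // x ^ n = x}
      = ((Polynomial.X ^ n - Polynomial.X : Polynomial E).roots.toFinset : Set E).ncard := by
        rw [← Nat.card_coe_set_eq]
        exact Nat.card_congr (Equiv.subtypeEquivRight fun x => by
          simp [hne, sub_eq_zero])
    _ ≤ n := by
        rw [Set.ncard_coe_finset]
        exact (Multiset.toFinset_card_le _).trans ((Polynomial.card_roots' _).trans
          (FiniteField.X_pow_card_sub_X_natDegree_eq E hn).le)

/-- Let `q` be a prime power, let `a` and `ℓ` be distinct primes with
`a > 2ℓ` and `ℓ ∣ q - 1`, and let `ζ ∈ F_q^*` have multiplicative order `ℓ`. Then, in the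
field `E = F_{q^(aℓ)}`, the polynomial `X^(q^a - 1) - ζ` has exactly `q^a - 1` distinct roots
(so all of its roots lie in `F_{q^(aℓ)}`), and at least `(q^a - 1)/2` of these roots have
minimal polynomial over `F_q` of degree exactly `aℓ`. -/
theorem stmt_18 (Fq E : Type) [Field Fq] [Fintype Fq] [Field E] [Fintype E] [Algebra Fq E]
    (a ℓ : ℕ) (hap : a.Prime) (hlp : ℓ.Prime) (hne : a ≠ ℓ) (haℓ : 2 * ℓ < a)
    (hdvd : ℓ ∣ Fintype.card Fq - 1) (ζ : Fq) (hζ : orderOf ζ = ℓ)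
    (hE : Fintype.card E = Fintype.card Fq ^ (a * ℓ)) :
    Nat.card {x : E // x ^ (Fintype.card Fq ^ a - 1) = algebraMap Fq E ζ}
        = Fintype.card Fq ^ a - 1 ∧
    Fintype.card Fq ^ a - 1 ≤
      2 * Nat.card {x : E // x ^ (Fintype.card Fq ^ a - 1) = algebraMap Fq E ζ ∧
        (minpoly Fq x).natDegree = a * ℓ} := by
  have hq : 2 ≤ Fintype.card Fq := Fintype.one_lt_card
  set q := Fintype.card Fq with hqdef
  have hQ : 2 ≤ q ^ a := hq.trans (Nat.le_self_pow hap.ne_zero q)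
  have hζ1 : ζ ≠ 1 := fun h => hlp.one_lt.ne' (by rw [← hζ, h, orderOf_one])
  have hζ0 : ζ ≠ 0 := by
    rintro rfl
    have := pow_orderOf_eq_one (0 : Fq)
    rw [hζ, zero_pow hlp.ne_zero] at this
    exact zero_ne_one this
  have hroots : Nat.card {x : E // x ^ (q ^ a - 1) = algebraMap Fq E ζ} = q ^ a - 1 := by
    refine FiniteField.natCard_pow_eq (m := ∑ i ∈ Finset.range ℓ, (q ^ a) ^ i) (by omega)
      (Finset.sum_pos (fun i _ => by positivity) ⟨0, by simpa using hlp.pos⟩) ?_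
      (by simpa using hζ0) ?_
    · rw [hE, pow_mul, mul_comm, Nat.geomSum_eq hQ, Nat.div_mul_cancel]
      simpa using Nat.sub_dvd_pow_sub_pow (q ^ a) 1 ℓ
    · rw [← map_pow, orderOf_dvd_iff_pow_eq_one.mp, map_one]
      rw [hζ]
      have hq1 : q ≡ 1 [MOD ℓ] := ((Nat.modEq_iff_dvd' (by omega)).mpr hdvd).symm
      have hterm (i : ℕ) : (q ^ a) ^ i ≡ 1 [MOD ℓ] := by
        simpa using (hq1.pow a).pow i
      refine Nat.modEq_zero_iff_dvd.mp ?_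
      have hsum : ∑ i ∈ Finset.range ℓ, (q ^ a) ^ i ≡ ∑ i ∈ Finset.range ℓ, 1 [MOD ℓ] :=
        Nat.ModEq.sum fun i _ => hterm i
      refine hsum.trans ?_
      simp [Nat.ModEq]
  refine ⟨hroots, ?_⟩
  have hrank : Module.finrank Fq E = a * ℓ := by
    have h := Module.card_eq_pow_finrank (K := Fq) (V := E)
    rw [hE] at h
    exact (Nat.pow_right_injective hq h).symm
  have hdeg {x : E} (hx : x ^ (q ^ a - 1) = algebraMap Fq E ζ) :
      (minpoly Fq x).natDegree = a * ℓ ∨ x ^ q ^ ℓ = x := by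
    have hd : (minpoly Fq x).natDegree ∣ a * ℓ := by
      rw [← hrank]
      exact minpoly.degree_dvd (IsIntegral.of_finite Fq x)
    have hx0 : x ≠ 0 := by
      rintro rfl
      rw [zero_pow (by omega)] at hx
      exact hζ0 (by simpa using hx.symm)
    have hnot : ¬ (minpoly Fq x).natDegree ∣ a := fun h => by
      have hfix := FiniteField.pow_card_pow_of_natDegree_minpoly_dvd h
      rw [← hqdef, ← Nat.sub_add_cancel (show 1 ≤ q ^ a by omega), pow_succ, hx] at hfix
      exact hζ1 ((algebraMap Fq E).injective
        (by rw [map_one]; exact (mul_eq_right₀ hx0).mp hfix))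
    obtain ⟨d₁, d₂, h₁, h₂, h₁₂⟩ := exists_dvd_and_dvd_of_dvd_mul hd
    rcases (Nat.dvd_prime hlp).mp h₂ with rfl | rfl
    · exact absurd (by rw [h₁₂, mul_one]; exact h₁) hnot
    · rcases (Nat.dvd_prime hap).mp h₁ with rfl | rfl
      · exact Or.inr (FiniteField.pow_card_pow_of_natDegree_minpoly_dvd (by rw [h₁₂, one_mul]))
      · exact Or.inl h₁₂
  have hbad : Nat.card {x : E // x ^ q ^ ℓ = x} ≤ q ^ ℓ :=
    natCard_pow_eq_self_le (Nat.one_lt_pow hlp.ne_zero hq)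
  have hunion : Nat.card {x : E // x ^ (q ^ a - 1) = algebraMap Fq E ζ} ≤
      Nat.card {x : E // x ^ (q ^ a - 1) = algebraMap Fq E ζ ∧
        (minpoly Fq x).natDegree = a * ℓ} + Nat.card {x : E // x ^ q ^ ℓ = x} := by
    refine le_trans (Set.ncard_le_ncard (s := {x : E | x ^ (q ^ a - 1) = algebraMap Fq E ζ})
      (t := {x : E | x ^ (q ^ a - 1) = algebraMap Fq E ζ ∧ (minpoly Fq x).natDegree = a * ℓ} ∪
        {x : E | x ^ q ^ ℓ = x}) (fun x hx => ?_) (Set.toFinite _)) (Set.ncard_union_le _ _)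
    exact (hdeg hx).imp (fun h => ⟨hx, h⟩) id
  have hsize : 4 * q ^ ℓ ≤ q ^ a := by
    calc 4 * q ^ ℓ ≤ q ^ 2 * q ^ ℓ := Nat.mul_le_mul_right _ (by nlinarith)
      _ = q ^ (2 + ℓ) := (pow_add q 2 ℓ).symm
      _ ≤ q ^ a := Nat.pow_le_pow_right (by omega) (by have := hlp.two_le; omega)
  have hpos : 0 < q ^ ℓ := by positivity
  omega
end
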